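/- Let (k_n) be any sequence of positive integers with k_n → ∞ and k_n = o(n^{1/3}) as n → ∞. Then C(n, k_n) ~ n^{n−2} · n^{3k_n/2} · ( e / (12 k_n) )^{k_n/2} · (3/√π) · k_n^{1/2}, i.e., the ratio of the two sides tends to 1 as n → ∞. -/

import Mathlib

/-!
The proof follows E. M. Wright's enumeration of sparse connected graphs, arranged so that every
estimate is an inequality between coefficients of power series.

*Recurrence.* Adding an oriented non-edge to a graph with `q` edges so that the result is connected
is the same as choosing a connected graph with `q + 1` edges and an oriented edge of it.  The graph
before the addition is either connected, or splits into two connected components with a marked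
vertex in each.  This double count (`connCard_rec`) becomes, for the exponential generating
functions `W k` of connected graphs of `n` vertices and `n + k - 1` edges and for `θ = x d/dx`,
the quadratic differential recurrence `W_rec`.  Its case of trees says that `T = θ W 0` satisfies
`W 0 = T - T ^ 2 / 2`, and hence that `P = 1 / (1 - T)` satisfies `θ P = P ^ 2 (P - 1)`.

*Sandwich.* With the sequence `a` defined by `a 1 = 1 / 2` and
`2 a (m + 2) = (3 m + 2) a (m + 1) + ∑ a (i + 1) a (m + 1 - i)`, one shows by induction,
coefficientwise,
`a k P ^ (3 k - 1) - O(k a k) P ^ (3 k - 2) ≤ θ (W k) ≤ a k P ^ (3 k - 1)`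
(`upper` and `lower`).  The induction step inverts the operator `(1 - T) θ + c`, which reflects
nonnegativity of coefficients.

*Coefficients of powers of `P`.* From `θ P = P ^ 2 (P - 1)` one gets the two step recurrence
`n [xⁿ] P ^ m = m ([xⁿ] P ^ (m + 2) - [xⁿ] P ^ (m + 1))`.  It starts from `[xⁿ] P = nⁿ / n!` and
`[xⁿ] P ^ 2 = ∑_{i ≤ n} nⁱ / i!`, and the latter is asymptotic to `√(π / 2) √n nⁿ / n!` by a Laplace
type integral.  The ratio to the leading term `√n ^ l nu l nⁿ / n!` thus tends to `1` uniformly in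
the range `l ^ 3 = o(n)` (`rho_tendsto`).  In that range the error term of the sandwich is
negligible as well, which is `count_div_lead_tendsto`.

*Constants.* The recursion for `a` is a Riccati equation for a generating function.  It is
linearised by a divergent hypergeometric series with coefficients `f`, whose growth follows from
Euler's limit for the Gamma function and the reflection formula `Γ(1/6) Γ(5/6) = 2 π`.  Therefore
`a (n + 1) ~ 3 / (2 π) (3 / 2) ^ n n!` (`ar_tendsto`).  The growth of `nu` is given by Wallis'
product (`nr_tendsto`).  Stirling's formula then turns `a (m + 1) nu (3 m + 1)` into the explicit
expression of the theorem (`cr_tendsto`).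
-/

open Filter Real

/-- `connGraphCount n k` is the number of connected simple graphs on the labeled vertex
set `{1,…,n}` (here `Fin n`) with exactly `n + k - 1` edges. -/
noncomputable def connGraphCount (n k : ℕ) : ℕ :=
  Nat.card {G : SimpleGraph (Fin n) // G.Connected ∧ G.edgeSet.ncard = n + k - 1}

/-! ### Connected graphs and the addition of an edge -/

/-- The number of connected graphs on the vertex type `V` with exactly `q` edges. -/
noncomputable def connCard (V : Type) (q : ℕ) : ℕ :=
  Nat.card {G : SimpleGraph V // G.Connected ∧ G.edgeSet.ncard = q}

theorem connCard_congr {V W : Type} (e : V ≃ W) (q : ℕ) : connCard V q = connCard W q := by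
  refine Nat.card_congr ((Equiv.simpleGraph e).subtypeEquiv fun G => ?_)
  have i : G ≃g (Equiv.simpleGraph e G) := (SimpleGraph.Iso.comap e.symm G).symm
  rw [i.connected_iff, ← Nat.card_coe_set_eq, ← Nat.card_coe_set_eq, Nat.card_congr i.mapEdgeSet]

section
variable {V : Type}

theorem card_adj_pairs [Finite V] (G : SimpleGraph V) :
    Nat.card {p : V × V // G.Adj p.1 p.2} = 2 * G.edgeSet.ncard := by
  classical
  have := Fintype.ofFinite V
  have e : {p : V × V // G.Adj p.1 p.2} ≃ G.Dart :=
    { toFun := fun p => ⟨p.1, p.2⟩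
      invFun := fun d => ⟨d.toProd, d.adj⟩
      left_inv := fun _ => rfl
      right_inv := fun _ => rfl }
  rw [Nat.card_congr e, Nat.card_eq_fintype_card, G.dart_card_eq_twice_card_edges,
    Set.ncard_eq_toFinset_card', SimpleGraph.edgeFinset]

theorem card_nonadj_pairs [Finite V] (G : SimpleGraph V) :
    Nat.card {p : V × V // p.1 ≠ p.2 ∧ ¬ G.Adj p.1 p.2} + 2 * G.edgeSet.ncard
      = Nat.card V * (Nat.card V - 1) := by
  classical
  have := Fintype.ofFinite V
  rw [← card_adj_pairs G]
  simp only [Nat.card_eq_fintype_card, Fintype.card_subtype]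
  rw [add_comm, ← Finset.card_union_of_disjoint, Nat.mul_sub_one]
  · rw [← Finset.card_univ, ← Finset.offDiag_card]
    congr 1
    ext ⟨a, b⟩
    simp only [Finset.mem_union, Finset.mem_filter, Finset.mem_univ, true_and, Finset.mem_offDiag]
    constructor
    · rintro (h | h)
      · exact h.ne
      · exact h.1
    · intro h
      tauto
  · rw [Finset.disjoint_filter]
    rintro ⟨a, b⟩ - h h2
    exact h2.2 h

/-- Pairs of a graph with `q` edges and an oriented non-edge whose addition produces a connected
graph. -/
def AddPairs (V : Type) (q : ℕ) : Set (SimpleGraph V × V × V) :=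
  {p | p.1.edgeSet.ncard = q ∧ p.2.1 ≠ p.2.2 ∧ ¬ p.1.Adj p.2.1 p.2.2 ∧
    (p.1 ⊔ SimpleGraph.edge p.2.1 p.2.2).Connected}

theorem ncard_sup_edge [Finite V] (G : SimpleGraph V) {u v : V} (h : u ≠ v) (hn : ¬ G.Adj u v) :
    (G ⊔ SimpleGraph.edge u v).edgeSet.ncard = G.edgeSet.ncard + 1 := by
  rw [SimpleGraph.edgeSet_sup, SimpleGraph.edgeSet_edge_of_ne h, Set.union_singleton,
    Set.ncard_insert_of_notMem (by simpa using hn) (Set.toFinite _)]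

theorem card_sigma_const {ι : Type} [Finite ι] {β : ι → Type} [∀ i, Finite (β i)] {c : ℕ}
    (h : ∀ i, Nat.card (β i) = c) : Nat.card (Σ i, β i) = Nat.card ι * c := by
  have := Fintype.ofFinite ι
  simp [Nat.card_sigma, h]

/-- Adding the edge identifies `AddPairs` with connected graphs with `q + 1` edges and a marked
oriented edge. -/
theorem card_addPairs [Finite V] (q : ℕ) :
    Nat.card (AddPairs V q) = connCard V (q + 1) * (2 * (q + 1)) := by
  have e : AddPairs V q ≃ Σ H : {G : SimpleGraph V // G.Connected ∧ G.edgeSet.ncard = q + 1},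
      {p : V × V // H.1.Adj p.1 p.2} :=
    { toFun := fun x => ⟨⟨x.1.1 ⊔ SimpleGraph.edge x.1.2.1 x.1.2.2, x.2.2.2.2, by
          rw [ncard_sup_edge _ x.2.2.1 x.2.2.2.1, x.2.1]⟩, x.1.2, by
          have := x.2.2.1
          simp [SimpleGraph.edge_adj, this]⟩
      invFun := fun y => ⟨(y.1.1 \ SimpleGraph.edge y.2.1.1 y.2.1.2, y.2.1), by
        have hadj := y.2.2
        have hne := hadj.ne
        have hs : y.1.1 \ SimpleGraph.edge y.2.1.1 y.2.1.2 ⊔ SimpleGraph.edge y.2.1.1 y.2.1.2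
            = y.1.1 := by
          rw [sdiff_sup_cancel]
          exact (SimpleGraph.edge_le_iff _).2 (Or.inr hadj)
        have hn : ¬ (y.1.1 \ SimpleGraph.edge y.2.1.1 y.2.1.2).Adj y.2.1.1 y.2.1.2 := by
          simp [SimpleGraph.edge_adj, hne]
        refine ⟨?_, hne, hn, ?_⟩
        · have := ncard_sup_edge _ hne hn
          rw [hs, y.1.2.2] at this
          show (y.1.1 \ SimpleGraph.edge y.2.1.1 y.2.1.2).edgeSet.ncard = q
          omega
        · show (y.1.1 \ SimpleGraph.edge y.2.1.1 y.2.1.2 ⊔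
            SimpleGraph.edge y.2.1.1 y.2.1.2).Connected
          rw [hs]
          exact y.1.2.1⟩
      left_inv := by
        rintro ⟨⟨G, u, v⟩, h1, h2, h3, h4⟩
        refine Subtype.ext (Prod.ext ?_ rfl)
        show (G ⊔ SimpleGraph.edge u v) \ SimpleGraph.edge u v = G
        rw [sup_sdiff_right_self, SimpleGraph.sdiff_edge _ h3]
      right_inv := by
        rintro ⟨⟨G, h1, h2⟩, ⟨u, v⟩, h3⟩
        have hs : G \ SimpleGraph.edge u v ⊔ SimpleGraph.edge u v = G := by
          rw [sdiff_sup_cancel]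
          exact (SimpleGraph.edge_le_iff _).2 (Or.inr h3)
        exact Sigma.subtype_ext (Subtype.ext hs) rfl }
  rw [Nat.card_congr e, card_sigma_const (c := 2 * (q + 1)), connCard]
  intro H
  rw [card_adj_pairs, H.2.2]

/-- The pairs whose graph is already connected are counted by its oriented non-edges; the latter
number `N (N - 1) - 2 q` is moved to the left to avoid subtraction. -/
theorem card_addPairs_conn [Finite V] (q : ℕ) :
    Nat.card {p : AddPairs V q // p.1.1.Connected} + connCard V q * (2 * q)
      = connCard V q * (Nat.card V * (Nat.card V - 1)) := by
  have e : {p : AddPairs V q // p.1.1.Connected} ≃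
      Σ H : {G : SimpleGraph V // G.Connected ∧ G.edgeSet.ncard = q},
      {p : V × V // p.1 ≠ p.2 ∧ ¬ H.1.Adj p.1 p.2} :=
    { toFun := fun x => ⟨⟨x.1.1.1, x.2, x.1.2.1⟩, x.1.1.2, x.1.2.2.1, x.1.2.2.2.1⟩
      invFun := fun y => ⟨⟨(y.1.1, y.2.1), y.1.2.2, y.2.2.1, y.2.2.2, y.1.2.1.mono le_sup_left⟩,
        y.1.2.1⟩
      left_inv := fun _ => rfl
      right_inv := fun _ => rfl }
  rw [Nat.card_congr e,
    card_sigma_const (c := Nat.card V * (Nat.card V - 1) - 2 * q), connCard, ← mul_add]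
  · rcases isEmpty_or_nonempty {G : SimpleGraph V // G.Connected ∧ G.edgeSet.ncard = q} with h | h
    · simp
    · obtain ⟨H⟩ := h
      have := card_nonadj_pairs H.1
      rw [H.2.2] at this
      congr 1
      omega
  · intro H
    have := card_nonadj_pairs H.1
    rw [H.2.2] at this
    omega

/-- The graph on `V` whose restrictions to `S` and `Sᶜ` are the given graphs, and which has no edge
between `S` and `Sᶜ`. -/
noncomputable def glue (S : Set V) (G₁ : SimpleGraph S) (G₂ : SimpleGraph ↑Sᶜ) : SimpleGraph V :=
  open Classical in (G₁ ⊕g G₂).comap (Equiv.Set.sumCompl S).symm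

open Classical in
/-- `glue` is isomorphic to the disjoint sum. -/
noncomputable def glueIso (S : Set V) (G₁ : SimpleGraph S) (G₂ : SimpleGraph ↑Sᶜ) :
    glue S G₁ G₂ ≃g G₁ ⊕g G₂ :=
  SimpleGraph.Iso.comap (Equiv.Set.sumCompl S).symm _

open Classical in
theorem glueIso_apply (S : Set V) (G₁ : SimpleGraph S) (G₂ : SimpleGraph ↑Sᶜ) (x : V) :
    glueIso S G₁ G₂ x = (Equiv.Set.sumCompl S).symm x := rfl

theorem glue_ncard [Finite V] (S : Set V) (G₁ : SimpleGraph S) (G₂ : SimpleGraph ↑Sᶜ) :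
    (glue S G₁ G₂).edgeSet.ncard = G₁.edgeSet.ncard + G₂.edgeSet.ncard := by
  rw [← Nat.card_coe_set_eq, Nat.card_congr (glueIso S G₁ G₂).mapEdgeSet,
    Nat.card_congr SimpleGraph.edgeSetSumEquiv, Nat.card_sum, Nat.card_coe_set_eq,
    Nat.card_coe_set_eq]

theorem glue_injective (S : Set V) {G₁ H₁ : SimpleGraph S} {G₂ H₂ : SimpleGraph ↑Sᶜ}
    (h : glue S G₁ G₂ = glue S H₁ H₂) : G₁ = H₁ ∧ G₂ = H₂ := by
  classical
  constructor
  · ext x y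
    have : (glue S G₁ G₂).Adj x y ↔ (glue S H₁ H₂).Adj x y := by rw [h]
    simpa [glue] using this
  · ext x y
    have : (glue S G₁ G₂).Adj x y ↔ (glue S H₁ H₂).Adj x y := by rw [h]
    simpa only [glue, SimpleGraph.comap_adj, Equiv.Set.sumCompl_symm_apply_compl,
      SimpleGraph.sum_adj_inr] using this

/-- If `G₁` is connected, then `S` is recovered from `glue S G₁ G₂` as the component of any vertex
of `S`. -/
theorem glue_reachable (S : Set V) {G₁ : SimpleGraph S} {G₂ : SimpleGraph ↑Sᶜ}
    (h1 : G₁.Connected) (u : S) (w : V) : (glue S G₁ G₂).Reachable u w ↔ w ∈ S := by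
  classical
  rw [← (SimpleGraph.Iso.reachable_iff (φ := glueIso S G₁ G₂)), glueIso_apply, glueIso_apply,
    Equiv.Set.sumCompl_symm_apply]
  by_cases hw : w ∈ S
  · rw [Equiv.Set.sumCompl_symm_apply_of_mem hw]
    exact iff_of_true ((h1.preconnected _ _).map SimpleGraph.Embedding.sumInl.toHom) hw
  · rw [Equiv.Set.sumCompl_symm_apply_of_notMem hw]
    exact iff_of_false (SimpleGraph.not_reachable_sum_inl_inr _ _) hw

theorem glue_sup_edge_connected (S : Set V) {G₁ : SimpleGraph S} {G₂ : SimpleGraph ↑Sᶜ}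
    (h1 : G₁.Connected) (h2 : G₂.Connected) (u : S) (v : ↑Sᶜ) :
    (glue S G₁ G₂ ⊔ SimpleGraph.edge (u : V) v).Connected := by
  classical
  have h := SimpleGraph.Connected.sum_sup_edge (v := u) (w := v) h1 h2
  rw [← (SimpleGraph.Iso.comap (Equiv.Set.sumCompl S).symm _).connected_iff] at h
  convert h using 1
  have hu := Equiv.Set.sumCompl_symm_apply u
  have hv := Equiv.Set.sumCompl_symm_apply_compl v
  ext x y
  rw [SimpleGraph.comap_adj, SimpleGraph.sup_adj, SimpleGraph.sup_adj, SimpleGraph.edge_adj,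
    SimpleGraph.edge_adj, ← hu, ← hv]
  simp only [EmbeddingLike.apply_eq_iff_eq, ne_eq, glue, SimpleGraph.comap_adj]

theorem reachable_or_of_sup_edge {G : SimpleGraph V} {u v : V}
    (h : (G ⊔ SimpleGraph.edge u v).Connected) (w : V) : G.Reachable u w ∨ G.Reachable v w := by
  have h1 := h.preconnected u w
  rw [SimpleGraph.reachable_iff_reflTransGen] at h1
  induction h1 with
  | refl => exact Or.inl (SimpleGraph.Reachable.refl _)
  | tail _ hbc ih =>
    rcases hbc with hbc | hbc
    · exact ih.imp (fun h => h.trans hbc.reachable) (fun h => h.trans hbc.reachable)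
    · rw [SimpleGraph.edge_adj] at hbc
      rcases hbc.1 with ⟨rfl, rfl⟩ | ⟨rfl, rfl⟩
      · exact Or.inr (SimpleGraph.Reachable.refl _)
      · exact Or.inl (SimpleGraph.Reachable.refl _)

theorem eq_glue {G : SimpleGraph V} {S : Set V} (h : ∀ x ∈ S, ∀ y ∉ S, ¬ G.Adj x y) :
    G = glue S (G.induce S) (G.induce Sᶜ) := by
  classical
  ext x y
  rw [glue, SimpleGraph.comap_adj]
  by_cases hx : x ∈ S <;> by_cases hy : y ∈ S
  · simp [Equiv.Set.sumCompl_symm_apply_of_mem, hx, hy]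
  · rw [Equiv.Set.sumCompl_symm_apply_of_mem hx, Equiv.Set.sumCompl_symm_apply_of_notMem hy]
    simp [h x hx y hy]
  · rw [Equiv.Set.sumCompl_symm_apply_of_notMem hx, Equiv.Set.sumCompl_symm_apply_of_mem hy]
    simpa using fun hh => h y hy x hx hh.symm
  · rw [Equiv.Set.sumCompl_symm_apply_of_notMem hx, Equiv.Set.sumCompl_symm_apply_of_notMem hy]
    simp

/-- Data of an oriented pair of connected graphs on complementary vertex sets with `q` edges in
total, with a marked vertex in each. -/
def SplitData (V : Type) (q : ℕ) : Type :=
  Σ S : Set V, {g : SimpleGraph S × SimpleGraph ↑Sᶜ // g.1.Connected ∧ g.2.Connected ∧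
    g.1.edgeSet.ncard + g.2.edgeSet.ncard = q} × (S × ↑Sᶜ)

/-- Joining two components by an edge between the marked vertices. -/
noncomputable def splitMap [Finite V] (q : ℕ) (x : SplitData V q) :
    {p : AddPairs V q // ¬ p.1.1.Connected} :=
  ⟨⟨(glue x.1 x.2.1.1.1 x.2.1.1.2, x.2.2.1, x.2.2.2), by
    obtain ⟨S, ⟨⟨G₁, G₂⟩, h1, h2, h3⟩, u, v⟩ := x
    have hr : ¬ (glue S G₁ G₂).Reachable u v := by
      rw [glue_reachable S h1]
      exact v.2
    refine ⟨by rw [glue_ncard]; exact h3, ?_, fun h => hr h.reachable,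
      glue_sup_edge_connected S h1 h2 u v⟩
    intro h
    have h' : (u : V) = v := h
    exact v.2 (h' ▸ u.2)⟩, by
    obtain ⟨S, ⟨⟨G₁, G₂⟩, h1, h2, h3⟩, u, v⟩ := x
    intro h
    exact v.2 ((glue_reachable S h1 u v).1 (h.preconnected _ _))⟩

theorem splitMap_bijective [Finite V] (q : ℕ) : Function.Bijective (splitMap (V := V) q) := by
  constructor
  · rintro ⟨S, ⟨⟨G₁, G₂⟩, h1, h2, h3⟩, u, v⟩ ⟨S', ⟨⟨G₁', G₂'⟩, h1', h2', h3'⟩, u', v'⟩ h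
    simp only [splitMap, Subtype.mk.injEq, Prod.mk.injEq] at h
    obtain ⟨hg, hu, hv⟩ := h
    obtain rfl : S = S' := by
      ext w
      rw [← glue_reachable S (G₂ := G₂) h1 u, ← glue_reachable S' (G₂ := G₂') h1' u', hg, hu]
    obtain ⟨rfl, rfl⟩ := glue_injective S hg
    obtain rfl := Subtype.ext hu
    obtain rfl := Subtype.ext hv
    rfl
  · rintro ⟨⟨⟨G, u, v⟩, h1, h2, h3, h4⟩, h5⟩
    dsimp only at h1 h2 h3 h4 h5
    have hor := reachable_or_of_sup_edge h4
    have huv : ¬ G.Reachable u v := by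
      intro huv
      have : ∀ w, G.Reachable u w := fun w => (hor w).elim id huv.trans
      exact h5 { preconnected := fun x y => (this x).symm.trans (this y), nonempty := ⟨u⟩ }
    set S : Set V := (G.connectedComponentMk u).supp with hS
    have hmem : ∀ w, w ∈ S ↔ G.Reachable u w := by
      intro w
      rw [hS, SimpleGraph.ConnectedComponent.mem_supp_iff, SimpleGraph.ConnectedComponent.eq]
      exact SimpleGraph.reachable_comm
    have hcompl : Sᶜ = (G.connectedComponentMk v).supp := by
      ext w
      rw [Set.mem_compl_iff, hmem, SimpleGraph.ConnectedComponent.mem_supp_iff,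
        SimpleGraph.ConnectedComponent.eq]
      constructor
      · intro h
        exact ((hor w).resolve_left h).symm
      · intro h h'
        exact huv (h'.trans h)
    have c1 : (G.induce S).Connected := (G.connectedComponentMk u).connected_toSimpleGraph
    have c2 : (G.induce Sᶜ).Connected := by
      rw [hcompl]
      exact (G.connectedComponentMk v).connected_toSimpleGraph
    have hG : G = glue S (G.induce S) (G.induce Sᶜ) := by
      refine eq_glue fun x hx y hy hxy => hy ?_
      rw [hmem] at hx ⊢
      exact hx.trans hxy.reachable
    refine ⟨⟨S, ⟨(G.induce S, G.induce Sᶜ), c1, c2, ?_⟩,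
      ⟨u, (hmem u).2 (SimpleGraph.Reachable.refl _)⟩, ⟨v, fun h => huv ((hmem v).1 h)⟩⟩, ?_⟩
    · rw [← glue_ncard, ← hG, h1]
    · refine Subtype.ext (Subtype.ext (Prod.ext ?_ rfl))
      exact hG.symm

theorem card_pairs (V W : Type) [Finite V] [Finite W] (q : ℕ) :
    Nat.card {g : SimpleGraph V × SimpleGraph W // g.1.Connected ∧ g.2.Connected ∧
      g.1.edgeSet.ncard + g.2.edgeSet.ncard = q}
    = ∑ t ∈ Finset.range (q + 1), connCard V t * connCard W (q - t) := by
  have e : {g : SimpleGraph V × SimpleGraph W // g.1.Connected ∧ g.2.Connected ∧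
      g.1.edgeSet.ncard + g.2.edgeSet.ncard = q} ≃
      Σ t : Fin (q + 1), {G : SimpleGraph V // G.Connected ∧ G.edgeSet.ncard = t} ×
        {G : SimpleGraph W // G.Connected ∧ G.edgeSet.ncard = q - t} :=
    { toFun := fun g => ⟨⟨g.1.1.edgeSet.ncard, by have := g.2.2.2; omega⟩,
        ⟨g.1.1, g.2.1, rfl⟩, ⟨g.1.2, g.2.2.1, by have := g.2.2.2; simp; omega⟩⟩
      invFun := fun y => ⟨(y.2.1.1, y.2.2.1), y.2.1.2.1, y.2.2.2.1, by
        have := y.2.1.2.2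
        have := y.2.2.2.2
        have := y.1.2
        simp only
        omega⟩
      left_inv := fun _ => rfl
      right_inv := by
        rintro ⟨⟨t, ht⟩, ⟨G₁, h1, h2⟩, G₂, h3, h4⟩
        dsimp only at h2
        subst h2
        rfl }
  rw [Nat.card_congr e, Nat.card_sigma, Finset.sum_range]
  simp only [Nat.card_prod]
  rfl

/-- The pairs whose graph is disconnected, sorted by the vertex set `S` of the component of the first
marked vertex and by the number of edges inside `S`. -/
theorem card_addPairs_disc (n q : ℕ) :
    Nat.card {p : AddPairs (Fin n) q // ¬ p.1.1.Connected}
      = ∑ s ∈ Finset.range (n + 1), n.choose s * ((∑ t ∈ Finset.range (q + 1),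
        connCard (Fin s) t * connCard (Fin (n - s)) (q - t)) * (s * (n - s))) := by
  classical
  rw [← Nat.card_congr (Equiv.ofBijective _ (splitMap_bijective q)), SplitData, Nat.card_sigma]
  have := Finset.sum_powerset_apply_card (fun s => (∑ t ∈ Finset.range (q + 1),
        connCard (Fin s) t * connCard (Fin (n - s)) (q - t)) * (s * (n - s)))
        (x := (Finset.univ : Finset (Fin n)))
  rw [Finset.powerset_univ, Finset.card_univ, Fintype.card_fin] at this
  simp only [smul_eq_mul] at this
  rw [← this]
  refine (Fintype.sum_equiv Fintype.finsetEquivSet _ _ fun S => ?_).symm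
  rw [Nat.card_prod, Nat.card_prod, card_pairs]
  have h1 : Nat.card ↑(Fintype.finsetEquivSet S) = S.card := by simp
  have h2 : Nat.card ↑(Fintype.finsetEquivSet S)ᶜ = n - S.card := by
    rw [Nat.card_coe_set_eq, Set.ncard_compl, ← Nat.card_coe_set_eq, h1]
    simp
  rw [h1, h2]
  congr 1
  refine Finset.sum_congr rfl fun t _ => ?_
  congr 1
  · exact connCard_congr (Finite.equivFinOfCardEq h1).symm _
  · exact connCard_congr (Finite.equivFinOfCardEq h2).symm _

/-- The edge-deletion recurrence for connected graphs by number of vertices and edges. -/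
theorem connCard_rec (n q : ℕ) :
    2 * (q + 1) * connCard (Fin n) (q + 1) + 2 * q * connCard (Fin n) q
      = n * (n - 1) * connCard (Fin n) q
        + ∑ s ∈ Finset.range (n + 1), n.choose s * ((∑ t ∈ Finset.range (q + 1),
        connCard (Fin s) t * connCard (Fin (n - s)) (q - t)) * (s * (n - s))) := by
  classical
  have h1 := card_addPairs (V := Fin n) q
  have h2 := card_addPairs_conn (V := Fin n) q
  have h3 := card_addPairs_disc n q
  have h4 : Nat.card (AddPairs (Fin n) q) = Nat.card {p : AddPairs (Fin n) q // p.1.1.Connected}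
      + Nat.card {p : AddPairs (Fin n) q // ¬ p.1.1.Connected} := by
    rw [← Nat.card_sum]
    exact Nat.card_congr (Equiv.sumCompl _).symm
  rw [← h3]
  rw [Nat.card_fin] at h2
  linarith

theorem connCard_eq_zero {n q : ℕ} (h : q + 1 < n) : connCard (Fin n) q = 0 := by
  rw [connCard, Nat.card_eq_zero]
  left
  refine ⟨fun ⟨G, h1, h2⟩ => ?_⟩
  have := h1.card_vert_le_card_edgeSet_add_one
  rw [Nat.card_coe_set_eq, h2, Nat.card_fin] at this
  omega

theorem connCard_zero (q : ℕ) : connCard (Fin 0) q = 0 := by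
  rw [connCard, Nat.card_eq_zero]
  left
  refine ⟨fun ⟨G, h1, h2⟩ => ?_⟩
  obtain ⟨x⟩ := h1.nonempty
  exact x.elim0

theorem connCard_one : connCard (Fin 1) 0 = 1 := by
  rw [connCard, Nat.card_eq_one_iff_unique]
  refine ⟨⟨fun G H => Subtype.ext (Subsingleton.elim _ _)⟩, ⟨⊥, ?_, by simp⟩⟩
  exact { preconnected := SimpleGraph.Preconnected.of_subsingleton, nonempty := inferInstance }

end

/-! ### Exponential generating functions -/

/-- The operator `x d/dx` on power series. -/
noncomputable def th : Derivation ℝ (PowerSeries ℝ) (PowerSeries ℝ) :=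
  (PowerSeries.X : PowerSeries ℝ) • PowerSeries.derivative ℝ

theorem coeff_th (F : PowerSeries ℝ) (n : ℕ) :
    PowerSeries.coeff n (th F) = n * PowerSeries.coeff n F := by
  rw [th, Derivation.smul_apply, smul_eq_mul]
  cases n with
  | zero => simp
  | succ n =>
    rw [PowerSeries.coeff_succ_X_mul, PowerSeries.coeff_derivative]
    push_cast
    ring

/-- The exponential generating function of connected graphs on `n` vertices with
`n + k - 1` edges. The truncated subtraction only matters for `n = k = 0`, where the coefficient is
`0` anyway because a connected graph has a vertex. -/
noncomputable def W (k : ℕ) : PowerSeries ℝ :=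
  PowerSeries.mk fun n => (connCard (Fin n) (n + k - 1) : ℝ) / n.factorial

theorem fact_mul_coeff_W (n k : ℕ) :
    (n.factorial : ℝ) * PowerSeries.coeff n (W k) = connCard (Fin n) (n + k - 1) := by
  rw [W, PowerSeries.coeff_mk]
  field_simp

theorem fact_mul_coeff_mul (n i j : ℕ) :
    (n.factorial : ℝ) * PowerSeries.coeff n (th (W i) * th (W j)) =
      ∑ s ∈ Finset.range (n + 1), (n.choose s * ((connCard (Fin s) (s + i - 1) *
        connCard (Fin (n - s)) ((n - s) + j - 1)) * (s * (n - s : ℕ))) : ℝ) := by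
  rw [PowerSeries.coeff_mul, Finset.Nat.sum_antidiagonal_eq_sum_range_succ_mk, Finset.mul_sum]
  refine Finset.sum_congr rfl fun s hs => ?_
  have hs' : s ≤ n := Nat.lt_succ_iff.1 (Finset.mem_range.1 hs)
  rw [coeff_th, coeff_th, ← fact_mul_coeff_W, ← fact_mul_coeff_W,
    ← Nat.choose_mul_factorial_mul_factorial hs']
  push_cast
  ring

/-- Only edge numbers at least `s - 1` resp. `r - 1` contribute to the sum over ways to distribute
edges on two connected components of `s` and `r` vertices. -/
theorem sum_connCard_shift (s r k : ℕ) :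
    ∑ t ∈ Finset.range (s + r + k + 1),
      connCard (Fin (s + 1)) t * connCard (Fin (r + 1)) (s + r + k - t)
    = ∑ j ∈ Finset.range (k + 1), connCard (Fin (s + 1)) (s + 1 + j - 1) *
        connCard (Fin (r + 1)) (r + 1 + (k - j) - 1) := by
  rw [show s + r + k + 1 = s + ((k + 1) + r) by ring, Finset.sum_range_add, Finset.sum_range_add]
  rw [Finset.sum_eq_zero, zero_add, Finset.sum_eq_zero (s := Finset.range r), add_zero]
  · refine Finset.sum_congr rfl fun j hj => ?_
    rw [Finset.mem_range] at hj
    congr 2 <;> omega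
  · intro x hx
    rw [connCard_eq_zero (n := r + 1), mul_zero]
    rw [Finset.mem_range] at hx
    omega
  · intro x hx
    rw [connCard_eq_zero (n := s + 1), zero_mul]
    rw [Finset.mem_range] at hx
    omega

/-- The contribution of disconnected graphs as a coefficient of a convolution of generating
functions. -/
theorem sum_split_eq (n k q : ℕ) (hq : q + 2 = n + k) :
    ∑ s ∈ Finset.range (n + 1), ((n.choose s * ((∑ t ∈ Finset.range (q + 1),
        connCard (Fin s) t * connCard (Fin (n - s)) (q - t)) * (s * (n - s))) : ℕ) : ℝ)
    = n.factorial * PowerSeries.coeff n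
      (∑ j ∈ Finset.range (k + 1), th (W j) * th (W (k - j))) := by
  rw [map_sum, Finset.mul_sum]
  simp_rw [fact_mul_coeff_mul]
  rw [Finset.sum_comm]
  refine Finset.sum_congr rfl fun s hs => ?_
  have hs' : s ≤ n := Nat.lt_succ_iff.1 (Finset.mem_range.1 hs)
  rcases Nat.eq_zero_or_pos s with rfl | hs0
  · simp
  rcases Nat.eq_zero_or_pos (n - s) with h0 | h0
  · simp [h0]
  obtain ⟨a, rfl⟩ : ∃ a, s = a + 1 := ⟨s - 1, by omega⟩
  obtain ⟨b, hb⟩ : ∃ b, n - (a + 1) = b + 1 := ⟨n - (a + 1) - 1, by omega⟩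
  rw [hb, show q = a + b + k by omega, sum_connCard_shift]
  push_cast
  rw [Finset.sum_mul, Finset.mul_sum]

/-- The edge-deletion recurrence for generating functions, in excess at least one. -/
theorem W_rec (k : ℕ) :
    2 * (th (W (k + 1)) + (k : ℝ) • W (k + 1)) = th (th (W k)) - 3 * th (W k)
      - (2 * ((k : ℝ) - 1)) • W k
      + ∑ j ∈ Finset.range (k + 2), th (W j) * th (W (k + 1 - j)) := by
  ext n
  rcases Nat.eq_zero_or_pos n with rfl | hn
  · have h0 : ∀ k, PowerSeries.coeff 0 (W k) = 0 := by
      intro k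
      rw [W, PowerSeries.coeff_mk, connCard_zero]
      simp
    have h1 : ∀ F, PowerSeries.constantCoeff (th F) = 0 := by
      intro F
      rw [← PowerSeries.coeff_zero_eq_constantCoeff_apply, coeff_th]
      simp
    have h2 : ∀ k, PowerSeries.constantCoeff (W k) = 0 := by
      intro F
      rw [← PowerSeries.coeff_zero_eq_constantCoeff_apply, h0]
    simp [h1, h2]
  · have hf : (n.factorial : ℝ) ≠ 0 := by positivity
    apply mul_left_cancel₀ hf
    obtain ⟨q, hq⟩ : ∃ q, q + 1 = n + k := ⟨n + k - 1, by omega⟩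
    have hrec := connCard_rec n q
    have hs := sum_split_eq n (k + 1) q (by omega)
    rw [show k + 1 + 1 = k + 2 by ring] at hs
    rw [map_add, map_sub, map_sub]
    push_cast at hs
    have hrec' := congrArg (Nat.cast (R := ℝ)) hrec
    push_cast [Nat.cast_sub (show 1 ≤ n by omega)] at hrec'
    have c1 := fact_mul_coeff_W n (k + 1)
    have c2 := fact_mul_coeff_W n k
    rw [show n + (k + 1) - 1 = q + 1 by omega] at c1
    rw [show n + k - 1 = q by omega] at c2
    rw [← c1, ← c2] at hrec'
    have hq' : (q : ℝ) = n + k - 1 := by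
      have : ((q + 1 : ℕ) : ℝ) = (n + k : ℕ) := by rw [hq]
      push_cast at this
      linarith
    rw [hq'] at hrec'
    have e2 : ∀ F : PowerSeries ℝ, PowerSeries.coeff n (2 * F) = 2 * PowerSeries.coeff n F := by
      intro F
      rw [show (2 : PowerSeries ℝ) = PowerSeries.C 2 from (map_ofNat _ 2).symm, PowerSeries.coeff_C_mul]
    have e3 : ∀ F : PowerSeries ℝ, PowerSeries.coeff n (3 * F) = 3 * PowerSeries.coeff n F := by
      intro F
      rw [show (3 : PowerSeries ℝ) = PowerSeries.C 3 from (map_ofNat _ 3).symm, PowerSeries.coeff_C_mul]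
    rw [e2, e3, map_add, map_smul, map_smul, coeff_th, coeff_th, coeff_th, smul_eq_mul, smul_eq_mul]
    linear_combination hrec' + hs

/-- The recurrence for trees: a tree with a marked oriented edge is an ordered pair of rooted
trees. -/
theorem W_zero_rec : 2 * (th (W 0) - W 0) = th (W 0) * th (W 0) := by
  ext n
  have e2 : ∀ F : PowerSeries ℝ, PowerSeries.coeff n (2 * F) = 2 * PowerSeries.coeff n F := by
    intro F
    rw [show (2 : PowerSeries ℝ) = PowerSeries.C 2 from (map_ofNat _ 2).symm, PowerSeries.coeff_C_mul]
  have hf : (n.factorial : ℝ) ≠ 0 := by positivity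
  apply mul_left_cancel₀ hf
  rcases Nat.lt_or_ge n 2 with h | h
  · rw [fact_mul_coeff_mul]
    rw [e2, map_sub, coeff_th]
    have : n = 0 ∨ n = 1 := by omega
    rcases this with rfl | rfl
    · simp [W, connCard_zero]
    · simp [Finset.sum_range_succ]
  · have hs := sum_split_eq n 0 (n - 2) (by omega)
    rw [zero_add, Finset.sum_range_one, show n - 2 + 1 = n - 1 by omega] at hs
    rw [← hs]
    have hrec := connCard_rec n (n - 2)
    rw [connCard_eq_zero (n := n) (q := n - 2) (by omega), show n - 2 + 1 = n - 1 by omega] at hrec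
    have hrec' := congrArg (Nat.cast (R := ℝ)) hrec
    have c1 := fact_mul_coeff_W n 0
    have h1 : (((n - 2 : ℕ) : ℝ)) = n - 2 := by rw [Nat.cast_sub h]; simp
    push_cast [h1, Nat.cast_sub (show 1 ≤ n by omega)] at hrec'
    rw [show n + 0 - 1 = n - 1 by omega] at c1
    rw [← c1] at hrec'
    rw [e2, map_sub, coeff_th]
    push_cast
    linear_combination hrec'

/-! ### The tree function and the upper bound -/

/-- Coefficientwise nonnegativity of a power series. -/
def Pos (F : PowerSeries ℝ) : Prop := ∀ n, 0 ≤ PowerSeries.coeff n F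

theorem Pos.add {F G : PowerSeries ℝ} (hF : Pos F) (hG : Pos G) : Pos (F + G) := fun n => by
  rw [map_add]; exact add_nonneg (hF n) (hG n)

theorem Pos.mul {F G : PowerSeries ℝ} (hF : Pos F) (hG : Pos G) : Pos (F * G) := fun n => by
  rw [PowerSeries.coeff_mul]; exact Finset.sum_nonneg fun x _ => mul_nonneg (hF _) (hG _)

theorem Pos.C {c : ℝ} (hc : 0 ≤ c) : Pos (PowerSeries.C c) := fun n => by
  rw [PowerSeries.coeff_C]; split_ifs <;> simp [hc]

theorem Pos.one : Pos 1 := by simpa using Pos.C (c := 1) zero_le_one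

theorem Pos.pow {F : PowerSeries ℝ} (hF : Pos F) (m : ℕ) : Pos (F ^ m) := by
  induction m with
  | zero => simpa using Pos.one
  | succ m ih => rw [pow_succ]; exact ih.mul hF

theorem Pos.sum {ι : Type} {s : Finset ι} {F : ι → PowerSeries ℝ} (h : ∀ i ∈ s, Pos (F i)) :
    Pos (∑ i ∈ s, F i) := fun n => by
  rw [map_sum]; exact Finset.sum_nonneg fun i hi => h i hi n

theorem Pos.th {F : PowerSeries ℝ} (hF : Pos F) : Pos (th F) := fun n => by
  rw [coeff_th]; exact mul_nonneg n.cast_nonneg (hF n)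

/-- If `c • F` is nonnegative for some `c > 0`, then so is `F`. -/
theorem Pos.of_C_mul {F : PowerSeries ℝ} {c : ℝ} (hc : 0 < c) (h : Pos (PowerSeries.C c * F)) :
    Pos F := fun n => by
  have := h n
  rw [PowerSeries.coeff_C_mul] at this
  exact nonneg_of_mul_nonneg_right this hc

/-- The generating function of rooted trees. -/
noncomputable def T : PowerSeries ℝ := th (W 0)

/-- The series `1 / (1 - T)`, encoded as `1 + x dT/dx`; the two agree by `P_mul`. -/
noncomputable def P : PowerSeries ℝ := 1 + th T

theorem posW (k : ℕ) : Pos (W k) := fun n => by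
  rw [W, PowerSeries.coeff_mk]; positivity

theorem posT : Pos T := (posW 0).th
theorem posP : Pos P := Pos.one.add posT.th

theorem two_mul_W_zero : 2 * W 0 = 2 * T - T * T := by
  have := W_zero_rec
  rw [← T] at this
  linear_combination -this

theorem coeff_T_zero : PowerSeries.coeff 0 T = 0 := by
  rw [T, coeff_th]; simp

theorem coeff_T_one : PowerSeries.coeff 1 T = 1 := by
  rw [T, coeff_th, W, PowerSeries.coeff_mk]
  simp [connCard_one]

theorem th_two_mul (F : PowerSeries ℝ) : th (2 * F) = 2 * th F := by
  rw [two_mul, map_add, two_mul]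

theorem th_T_mul : th T * (1 - T) = T := by
  have h := congrArg th two_mul_W_zero
  rw [map_sub, th_two_mul, th_two_mul, ← T, Derivation.leibniz, smul_eq_mul] at h
  have h2 : (2 : PowerSeries ℝ) ≠ 0 := by
    rw [show (2 : PowerSeries ℝ) = PowerSeries.C 2 from (map_ofNat _ 2).symm]
    simp
  apply mul_left_cancel₀ h2
  linear_combination -h

theorem P_mul : P * (1 - T) = 1 := by
  rw [P]; linear_combination th_T_mul

theorem P_sub_one : P - 1 = T * P := by linear_combination P_mul

theorem th_T : th T = P - 1 := by rw [P]; ring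

theorem pos_P_sub_one : Pos (P - 1) := by rw [← th_T]; exact posT.th

theorem th_P : th P = P ^ 2 * (P - 1) := by
  have h := congrArg th P_mul
  rw [Derivation.leibniz, map_sub, map_one_eq_zero, th_T, smul_eq_mul, smul_eq_mul] at h
  linear_combination P * h - th P * P_mul
where
  map_one_eq_zero : th (1 : PowerSeries ℝ) = 0 := Derivation.map_one_eq_zero _

theorem th_P_pow (m : ℕ) : th (P ^ m) = (m : PowerSeries ℝ) * (P ^ (m + 1) * (P - 1)) := by
  rcases m with _ | m
  · simp
  · rw [Derivation.leibniz_pow, th_P]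
    simp only [smul_eq_mul, nsmul_eq_mul, add_tsub_cancel_right]
    ring

theorem th_C_mul (c : ℝ) (F : PowerSeries ℝ) :
    th (PowerSeries.C c * F) = PowerSeries.C c * th F := by
  ext n
  rw [coeff_th, PowerSeries.coeff_C_mul, PowerSeries.coeff_C_mul, coeff_th]
  ring

/-- The operator `(1 - T) x d/dx + c` reflects nonnegativity. -/
theorem Pos.of_op {F : PowerSeries ℝ} {c : ℝ} (hc : 0 < c)
    (h : Pos ((1 - T) * _root_.th F + PowerSeries.C c * F)) : Pos F := by
  intro n
  induction n using Nat.strong_induction_on with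
  | _ n ih =>
    have h1 := h n
    have h2 : 0 ≤ PowerSeries.coeff n (T * _root_.th F) := by
      rw [PowerSeries.coeff_mul]
      refine Finset.sum_nonneg fun x hx => ?_
      have hx' := Finset.HasAntidiagonal.mem_antidiagonal.1 hx
      rcases Nat.eq_zero_or_pos x.1 with h0 | h0
      · rw [h0, coeff_T_zero, zero_mul]
      · rw [coeff_th]
        exact mul_nonneg (posT _) (mul_nonneg (Nat.cast_nonneg _) (ih _ (by omega)))
    rw [sub_mul, one_mul, map_add, map_sub, coeff_th, PowerSeries.coeff_C_mul] at h1
    have h3 : 0 ≤ (n + c) * PowerSeries.coeff n F := by linarith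
    exact nonneg_of_mul_nonneg_right h3 (by positivity)

/-- The leading coefficients: `a k * P ^ (3 k - 1)` is the leading term of `x d/dx (W k)` for
`k ≥ 1`. They satisfy the Riccati type recursion obtained by comparing top powers of `P` in the
recurrence for `W`. The value at `0` plays no role. -/
noncomputable def a : ℕ → ℝ
  | 0 => 0
  | 1 => 1 / 2
  | (m + 2) => ((3 * m + 2) * a (m + 1) + ∑ i : Fin (m + 1), a (i + 1) * a (m + 1 - i)) / 2
decreasing_by all_goals omega

theorem a_one : a 1 = 1 / 2 := by rw [a]

theorem a_rec (m : ℕ) : 2 * a (m + 2) = (3 * m + 2) * a (m + 1) +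
    ∑ i ∈ Finset.range (m + 1), a (i + 1) * a (m + 1 - i) := by
  rw [a, Finset.sum_range]; ring

theorem a_pos (m : ℕ) : 0 < a (m + 1) := by
  induction m using Nat.strong_induction_on with
  | _ m ih =>
    rcases m with _ | m
    · rw [a_one]; norm_num
    · have h := a_rec m
      have h1 : 0 ≤ ∑ i ∈ Finset.range (m + 1), a (i + 1) * a (m + 1 - i) := by
        refine Finset.sum_nonneg fun i hi => ?_
        rw [Finset.mem_range] at hi
        rw [show m + 1 - i = (m - i) + 1 by omega]
        exact (mul_pos (ih i (by omega)) (ih (m - i) (by omega))).le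
      have h2 := ih m (by omega)
      have : 0 < (3 * (m : ℝ) + 2) * a (m + 1) := by positivity
      linarith

theorem a_step_le (m : ℕ) : (3 * m + 2) * a (m + 1) ≤ 2 * a (m + 2) := by
  rw [a_rec]
  have : 0 ≤ ∑ i ∈ Finset.range (m + 1), a (i + 1) * a (m + 1 - i) := by
    refine Finset.sum_nonneg fun i hi => ?_
    rw [Finset.mem_range] at hi
    rw [show m + 1 - i = (m - i) + 1 by omega]
    exact (mul_pos (a_pos i) (a_pos (m - i))).le
  linarith

/-- The recurrence with the tree contribution moved to the left-hand side. -/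
theorem H_rec (k : ℕ) :
    2 * ((1 - T) * th (W (k + 1)) + PowerSeries.C (k : ℝ) * W (k + 1)) = th (th (W k))
      - 3 * th (W k) - 2 * (PowerSeries.C (k : ℝ) - 1) * W k
      + ∑ i ∈ Finset.range k, th (W (i + 1)) * th (W (k - i)) := by
  have h := W_rec k
  rw [Finset.sum_range_succ, Finset.sum_range_succ'] at h
  have hT : th (W 0) = T := rfl
  simp only [Nat.add_sub_add_right, Nat.sub_self, tsub_zero, hT, PowerSeries.smul_eq_C_mul,
    map_mul, map_sub, map_ofNat, map_one] at h
  linear_combination h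

/-- The generating function of unicyclic graphs with a marked vertex in closed form. -/
theorem H_one : 2 * th (W 1) = P ^ 2 - 3 * P + 2 + T := by
  have h := H_rec 0
  rw [← T, th_T] at h
  simp only [Finset.range_zero, Finset.sum_empty, Nat.cast_zero, map_zero, zero_mul, add_zero,
    zero_add, zero_sub] at h
  have h0 := two_mul_W_zero
  linear_combination P * h - 2 * th (W 1) * P_mul + P * h0 + (2 + T) * P_sub_one

/-- Upper bounds: the `k`-th generating function is dominated by its leading term. The bound carries
the factor `P - 1` so that it can be integrated against `x d/dx`; the second part is the integrated
form, which bounds `W` itself. -/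
theorem upper (m : ℕ) :
    Pos (PowerSeries.C (a (m + 1)) * (P ^ (3 * m + 2) - P ^ (3 * m + 1)) - th (W (m + 1))) ∧
    Pos (PowerSeries.C (a (m + 1)) * P ^ (3 * m) - 3 * PowerSeries.C (m : ℝ) * W (m + 1)) := by
  induction m using Nat.strong_induction_on with
  | _ m ih =>
  rcases m with _ | m
  · constructor
    · refine Pos.of_C_mul (c := 2) two_pos ?_
      have e : PowerSeries.C (2 : ℝ) * (PowerSeries.C (a (0 + 1)) * (P ^ (3 * 0 + 2)
          - P ^ (3 * 0 + 1)) - th (W (0 + 1))) = (P - 1) + T * (P - 1) := by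
        have h2 : (PowerSeries.C (2 : ℝ)) * PowerSeries.C (a 1) = 1 := by
          rw [← map_mul, a_one]; norm_num
        have h3 : (PowerSeries.C (2 : ℝ)) = 2 := map_ofNat _ 2
        have h4 := H_one
        have h5 := P_sub_one
        simp only [zero_add, mul_zero]
        linear_combination (P ^ 2 - P ^ 1) * h2 - th (W 1) * h3 - h4 + h5
      rw [e]
      exact pos_P_sub_one.add (posT.mul pos_P_sub_one)
    · simpa using Pos.C (a_pos 0).le
  · set p : ℕ := 3 * m + 2 with hp
    set A : PowerSeries ℝ := PowerSeries.C (a (m + 2)) with hA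
    set B : PowerSeries ℝ := PowerSeries.C (a (m + 1)) with hB
    set M : PowerSeries ℝ := PowerSeries.C (m : ℝ) with hM
    set s : ℝ := ∑ i ∈ Finset.range (m + 1), a (i + 1) * a (m + 1 - i) with hs
    set S : PowerSeries ℝ := ∑ i ∈ Finset.range (m + 1), th (W (i + 1)) * th (W (m + 1 - i))
      with hS
    have hrec : 2 * A = (3 * M + 2) * B + PowerSeries.C s := by
      have := congrArg (PowerSeries.C (R := ℝ)) (a_rec m)
      simpa only [map_mul, map_add, map_ofNat] using this
    have hH := H_rec (m + 1)
    rw [show PowerSeries.C ((m + 1 : ℕ) : ℝ) = M + 1 by push_cast; rw [map_add, map_one]] at hH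
    have hsum : Pos (PowerSeries.C s * (P ^ p * (P - 1) ^ 2) - S) := by
      have : PowerSeries.C s * (P ^ p * (P - 1) ^ 2) - S = ∑ i ∈ Finset.range (m + 1),
          (PowerSeries.C (a (i + 1)) * PowerSeries.C (a (m + 1 - i)) * (P ^ p * (P - 1) ^ 2) -
            th (W (i + 1)) * th (W (m + 1 - i))) := by
        rw [Finset.sum_sub_distrib, ← Finset.sum_mul, hs, map_sum, hS]
        simp only [map_mul]
      rw [this]
      refine Pos.sum fun i hi => ?_
      rw [Finset.mem_range] at hi
      obtain ⟨j, rfl⟩ : ∃ j, m = i + j := ⟨m - i, by omega⟩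
      rw [show i + j + 1 - i = j + 1 by omega]
      have hi' := (ih i (by omega)).1
      have hj' := (ih j (by omega)).1
      have hU : Pos (PowerSeries.C (a (i + 1)) * (P ^ (3 * i + 2) - P ^ (3 * i + 1))) := by
        have : P ^ (3 * i + 2) - P ^ (3 * i + 1) = P ^ (3 * i + 1) * (P - 1) := by ring
        rw [this]
        exact (Pos.C (a_pos i).le).mul ((posP.pow _).mul pos_P_sub_one)
      convert (hU.mul hj').add (hi'.mul (posW (j + 1)).th) using 1
      rw [hp]
      ring
    have h1 := (ih m (by omega)).1.th
    rw [map_sub, th_C_mul, map_sub, th_P_pow, th_P_pow] at h1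
    have hcm : (3 * ((m : ℝ) + 1)) * (a (m + 2) / (3 * (m + 1))) = a (m + 2) := by field_simp
    set b : ℝ := a (m + 2) / (3 * (m + 1)) with hb
    have hcm' : 3 * (M + 1) * PowerSeries.C b = A := by
      rw [hA, ← hcm, map_mul, map_mul, map_add, map_one, map_ofNat]
    -- Integrated form of the bound, by applying `(1 - T) x d/dx + (m + 1)` to the difference. The
    -- result is a combination with nonnegative coefficients of series known to be nonnegative.
    have hF : Pos (PowerSeries.C b * P ^ (3 * m + 3) - W (m + 2)) := by
      refine Pos.of_op (c := (m : ℝ) + 1) (by positivity) (Pos.of_C_mul (c := 6) (by norm_num) ?_)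
      have hpos2 : Pos (3 * (2 * A - B)) := by
        have h3 : Pos (PowerSeries.C (3 * (2 * a (m + 2) - a (m + 1)))) := by
          apply Pos.C
          have := a_step_le m
          have := a_pos m
          have : 0 ≤ 3 * (m : ℝ) * a (m + 1) := by positivity
          nlinarith
        simpa only [map_mul, map_sub, map_ofNat] using h3
      have hposA : Pos (2 * A) := by
        have : Pos (PowerSeries.C (2 * a (m + 2))) := Pos.C (by have := a_pos (m + 1); positivity)
        simpa only [map_mul, map_ofNat] using this
      have h3' : Pos (3 : PowerSeries ℝ) := by
        rw [← map_ofNat (PowerSeries.C (R := ℝ)) 3]; exact Pos.C (by norm_num)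
      have h6' : Pos (6 : PowerSeries ℝ) := by
        rw [← map_ofNat (PowerSeries.C (R := ℝ)) 6]; exact Pos.C (by norm_num)
      have hpos3 : Pos (3 * ((M + M) * W (m + 1))) := h3'.mul
        (((Pos.C m.cast_nonneg).add (Pos.C m.cast_nonneg)).mul (posW _))
      convert (((((h3'.mul h1).add (h3'.mul hsum)).add ((posP.pow p).mul
        (hpos2.mul pos_P_sub_one))).add ((posP.pow (p + 1)).mul hposA)).add
        (h3'.mul (h3'.mul (posW (m + 1)).th))).add hpos3 using 1
      rw [map_sub, th_C_mul, th_P_pow]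
      rw [hp]
      have e1 : ((3 * m + 3 : ℕ) : PowerSeries ℝ) = 3 * (M + 1) := by
        rw [hM, map_natCast]; push_cast; ring
      have e2 : ((3 * m + 2 : ℕ) : PowerSeries ℝ) = 3 * M + 2 := by
        rw [hM, map_natCast]; push_cast; ring
      have e3 : ((3 * m + 1 : ℕ) : PowerSeries ℝ) = 3 * M + 1 := by
        rw [hM, map_natCast]; push_cast; ring
      have e4 : PowerSeries.C (6 : ℝ) = 6 := map_ofNat _ 6
      have e5 : PowerSeries.C ((m : ℝ) + 1) = M + 1 := by rw [map_add, map_one]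
      rw [e1, e2, e3, e4, e5]
      have hPm : P ^ (3 * m + 4) * (1 - T) = P ^ (3 * m + 3) := by
        rw [pow_succ, mul_assoc, P_mul, mul_one]
      linear_combination (exp := 1) (-3) * hH + 6 * (3 * (M + 1)) * PowerSeries.C b * (P - 1) * hPm
        + (6 * (P - 1) + 2) * P ^ (3 * m + 3) * hcm' + 3 * P ^ (3 * m + 2) * (P - 1) ^ 2 * hrec
    constructor
    · convert hF.th using 1
      rw [map_sub, th_C_mul, th_P_pow]
      have e1 : ((3 * m + 3 : ℕ) : PowerSeries ℝ) = 3 * (M + 1) := by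
        rw [hM, map_natCast]; push_cast; ring
      rw [e1]
      linear_combination -(P ^ (3 * m + 4) * (P - 1)) * hcm'
    · have h3 : Pos (3 * (M + 1)) := by
        have : Pos (PowerSeries.C (3 * ((m : ℝ) + 1))) := Pos.C (by positivity)
        simpa only [map_mul, map_add, map_one, map_ofNat] using this
      convert h3.mul hF using 1
      rw [show PowerSeries.C ((m + 1 : ℕ) : ℝ) = M + 1 by push_cast; rw [map_add, map_one]]
      linear_combination -(P ^ (3 * m + 3)) * hcm'

/-! ### The lower bound -/

theorem H_one_lower {K : ℝ} (hK : 3 ≤ K) :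
    Pos (th (W 1) - PowerSeries.C (a 1) * P ^ 2 + PowerSeries.C (K * a 1) * P) := by
  refine Pos.of_C_mul (c := 2) two_pos ?_
  have h : Pos (PowerSeries.C (K - 3) * P + PowerSeries.C 2 + T) :=
    (((Pos.C (by linarith)).mul posP).add (Pos.C two_pos.le)).add posT
  convert h using 1
  have h2 : (PowerSeries.C (2 : ℝ)) * PowerSeries.C (a 1) = 1 := by
    rw [← map_mul, a_one]; norm_num
  have h3 : (PowerSeries.C (2 : ℝ)) = 2 := map_ofNat _ 2
  have h5 : (PowerSeries.C (3 : ℝ)) = 3 := map_ofNat _ 3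
  rw [map_mul, map_sub, h5]
  linear_combination (PowerSeries.C K * P - P ^ 2) * h2 + (th (W 1) - 1) * h3 + H_one

/-- Lower bounds: the `k`-th generating function is its leading term up to a term of relative
order `k` in the next lower power of `P`. The number `D` bounds the growth of `a`. -/
theorem lower {D : ℝ} (hD0 : 0 ≤ D) (hD : ∀ m : ℕ, a (m + 2) ≤ D * (m + 2) * a (m + 1)) (m : ℕ) :
    Pos (th (W (m + 1)) - PowerSeries.C (a (m + 1)) * P ^ (3 * m + 2) +
      PowerSeries.C ((3 + D) * (m + 1) * a (m + 1)) * P ^ (3 * m + 1)) := by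
  set K : ℝ := 3 + D with hK
  induction m using Nat.strong_induction_on with
  | _ m ih =>
  rcases m with _ | m
  · simpa using H_one_lower (K := K) (by linarith)
  · set p : ℕ := 3 * m + 2 with hp
    set A : PowerSeries ℝ := PowerSeries.C (a (m + 2)) with hA
    set B : PowerSeries ℝ := PowerSeries.C (a (m + 1)) with hB
    set M : PowerSeries ℝ := PowerSeries.C (m : ℝ) with hM
    set L : PowerSeries ℝ := PowerSeries.C K with hL
    set s : ℝ := ∑ i ∈ Finset.range (m + 1), a (i + 1) * a (m + 1 - i) with hs
    set S : PowerSeries ℝ := ∑ i ∈ Finset.range (m + 1), th (W (i + 1)) * th (W (m + 1 - i))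
      with hS
    have hrec : 2 * A = (3 * M + 2) * B + PowerSeries.C s := by
      have := congrArg (PowerSeries.C (R := ℝ)) (a_rec m)
      simpa only [map_mul, map_add, map_ofNat] using this
    have hH := H_rec (m + 1)
    rw [show PowerSeries.C ((m + 1 : ℕ) : ℝ) = M + 1 by push_cast; rw [map_add, map_one]] at hH
    -- Termwise lower bound of the quadratic term: for series `w₁`, `w₂` with leading terms
    -- `U₁`, `U₂` and corrections `G₁`, `G₂`, one has `w₁ w₂ - U₁ U₂ + U₁ G₂ + G₁ U₂ =
    -- w₁ (w₂ - U₂ + G₂) + (w₁ - U₁ + G₁) U₂ + (U₁ - w₁) G₂`.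
    have hsum : Pos (S - PowerSeries.C s * P ^ (3 * m + 4)
        + L * (M + 2) * PowerSeries.C s * P ^ (3 * m + 3)) := by
      have : S - PowerSeries.C s * P ^ (3 * m + 4)
          + L * (M + 2) * PowerSeries.C s * P ^ (3 * m + 3) = ∑ i ∈ Finset.range (m + 1),
          (th (W (i + 1)) * th (W (m + 1 - i))
            - PowerSeries.C (a (i + 1)) * PowerSeries.C (a (m + 1 - i)) * (P ^ (3 * m + 4)
              - L * (M + 2) * P ^ (3 * m + 3))) := by
        rw [Finset.sum_sub_distrib, ← Finset.sum_mul, hs, map_sum, hS]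
        simp only [map_mul]
        ring
      rw [this]
      refine Pos.sum fun i hi => ?_
      rw [Finset.mem_range] at hi
      obtain ⟨j, rfl⟩ : ∃ j, m = i + j := ⟨m - i, by omega⟩
      rw [show i + j + 1 - i = j + 1 by omega]
      have hi' := ih i (by omega)
      have hj' := ih j (by omega)
      have hAj : Pos (PowerSeries.C (a (j + 1)) * P ^ (3 * j + 2)) :=
        (Pos.C (a_pos j).le).mul (posP.pow _)
      have hGi : Pos (PowerSeries.C (K * (i + 1) * a (i + 1)) * P ^ (3 * i + 1)) :=
        (Pos.C (by have := a_pos i; positivity)).mul (posP.pow _)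
      have hGj : Pos (PowerSeries.C (K * (j + 1) * a (j + 1)) * P ^ (3 * j + 1)) :=
        (Pos.C (by have := a_pos j; positivity)).mul (posP.pow _)
      have hui : Pos (PowerSeries.C (a (i + 1)) * P ^ (3 * i + 2) - th (W (i + 1))) := by
        have h0 : Pos (PowerSeries.C (a (i + 1)) * P ^ (3 * i + 1)) :=
          (Pos.C (a_pos i).le).mul (posP.pow _)
        convert (upper i).1.add h0 using 1
        ring
      convert (((posW (i + 1)).th.mul hj').add (hi'.mul hAj)).add (hui.mul hGj) using 1
      rw [hM]
      push_cast
      simp only [map_mul, map_add, map_one, ← hL]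
      ring
    have h1 := (ih m (by omega)).th
    rw [map_add, map_sub, th_C_mul, th_C_mul, th_P_pow, th_P_pow] at h1
    have h2 := (upper m).1
    have h3 := (upper m).2
    have h5 := (upper (m + 1)).2
    rw [show PowerSeries.C ((m + 1 : ℕ) : ℝ) = M + 1 by push_cast; rw [map_add, map_one]] at h5
    have num : ∀ c : ℕ, Pos (c : PowerSeries ℝ) := fun c => by
      rw [← map_natCast (PowerSeries.C (R := ℝ))]; exact Pos.C c.cast_nonneg
    have n2 : Pos (2 : PowerSeries ℝ) := num 2
    have n3 : Pos (3 : PowerSeries ℝ) := num 3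
    have n9 : Pos (9 : PowerSeries ℝ) := num 9
    have hk : Pos (3 * L * B * (4 * M + 3) - (9 * M + 17) * B - 2 * A) := by
      have h0 : Pos (PowerSeries.C (3 * K * a (m + 1) * (4 * m + 3) - (9 * m + 17) * a (m + 1)
          - 2 * a (m + 2))) := by
        apply Pos.C
        have e1 := hD m
        have e2 := a_pos m
        have e3 : 0 ≤ D * a (m + 1) := by positivity
        have e4 : 0 ≤ D * a (m + 1) * m := by positivity
        have e5 : 0 ≤ a (m + 1) * m := by positivity
        rw [hK]
        nlinarith
      simpa only [map_mul, map_sub, map_add, map_ofNat] using h0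
    have pB : Pos B := Pos.C (a_pos m).le
    have pM : Pos M := Pos.C m.cast_nonneg
    have pL : Pos L := Pos.C (by positivity)
    have r1 : Pos (L * (M + 1) * B * (3 * M + 1) * P ^ (3 * m + 2)) :=
      (((pL.mul (pM.add Pos.one)).mul pB).mul ((n3.mul pM).add Pos.one)).mul (posP.pow _)
    have r2 : Pos (B * (P ^ (3 * m + 2) * (P - 1))) :=
      pB.mul ((posP.pow _).mul pos_P_sub_one)
    have r3 : Pos (B * P ^ (3 * m + 1)) := pB.mul (posP.pow _)
    have r4 : Pos (B * (P ^ (3 * m) * ((P - 1) * (P ^ 2 + P + 1)))) :=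
      pB.mul ((posP.pow _).mul (pos_P_sub_one.mul (((posP.pow _).add posP).add Pos.one)))
    -- Six times the series to be bounded below equals `P` times a sum of nonnegative series; the factor
    -- `P` cancels `1 - T` in the recurrence.
    have key : Pos (P * (3 * (th (th (W (m + 1))) - B * (((3 * m + 2 : ℕ) : PowerSeries ℝ) *
          (P ^ (3 * m + 2 + 1) * (P - 1))) + PowerSeries.C (K * (m + 1) * a (m + 1)) *
          (((3 * m + 1 : ℕ) : PowerSeries ℝ) * (P ^ (3 * m + 1 + 1) * (P - 1))))
        + 9 * (B * (P ^ (3 * m + 2) - P ^ (3 * m + 1)) - th (W (m + 1)))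
        + 2 * (B * P ^ (3 * m) - 3 * M * W (m + 1))
        + 3 * (S - PowerSeries.C s * P ^ (3 * m + 4)
          + L * (M + 2) * PowerSeries.C s * P ^ (3 * m + 3))
        + 2 * (A * P ^ (3 * m + 3) - 3 * (M + 1) * W (m + 2))
        + (3 * L * B * (4 * M + 3) - (9 * M + 17) * B - 2 * A) * P ^ (3 * m + 3)
        + 3 * (L * (M + 1) * B * (3 * M + 1) * P ^ (3 * m + 2))
        + 9 * (B * (P ^ (3 * m + 2) * (P - 1))) + 9 * (B * P ^ (3 * m + 1))
        + 2 * (B * (P ^ (3 * m) * ((P - 1) * (P ^ 2 + P + 1)))))) :=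
      posP.mul ((((((((((n3.mul h1).add (n9.mul h2)).add (n2.mul h3)).add (n3.mul hsum)).add
        (n2.mul h5)).add (hk.mul (posP.pow _))).add (n3.mul r1)).add (n9.mul r2)).add
        (n9.mul r3)).add (n2.mul r4))
    refine Pos.of_C_mul (c := 6) (by norm_num) ?_
    convert key using 1
    have e1 : PowerSeries.C (K * ((m + 1 : ℕ) + 1) * a (m + 1 + 1)) = L * (M + 2) * A := by
      push_cast
      simp only [map_mul, map_add, map_one]
      rw [← hL, ← hM, hA]
      ring
    have e2 : PowerSeries.C (K * (m + 1) * a (m + 1)) = L * (M + 1) * B := by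
      simp only [map_mul, map_add, map_one]
      rw [← hL, ← hM, hB]
    have e3 : ((3 * m + 2 : ℕ) : PowerSeries ℝ) = 3 * M + 2 := by
      rw [hM, map_natCast]; push_cast; ring
    have e4 : ((3 * m + 1 : ℕ) : PowerSeries ℝ) = 3 * M + 1 := by
      rw [hM, map_natCast]; push_cast; ring
    have e6 : PowerSeries.C (6 : ℝ) = 6 := map_ofNat _ 6
    rw [e1, e2, e3, e4, e6]
    linear_combination 3 * P * hH - 6 * th (W (m + 2)) * P_mul
        - (3 * P ^ (3 * m + 5) - 3 * L * (M + 2) * P ^ (3 * m + 4)) * hrec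

/-! ### Coefficients of the powers of `P` -/

theorem coeff_P_pow_rec (n m : ℕ) : (n : ℝ) * PowerSeries.coeff n (P ^ m) =
    m * (PowerSeries.coeff n (P ^ (m + 2)) - PowerSeries.coeff n (P ^ (m + 1))) := by
  have h := congrArg (PowerSeries.coeff n) (th_P_pow m)
  rw [coeff_th] at h
  rw [h, ← map_natCast (PowerSeries.C (R := ℝ)), PowerSeries.coeff_C_mul, mul_sub, mul_one,
    map_sub, ← pow_succ]

theorem th_T_pow (j : ℕ) : th (T ^ j) = (j : PowerSeries ℝ) * (T ^ j * P) := by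
  rcases j with _ | j
  · simp
  · rw [Derivation.leibniz_pow, th_T, P_sub_one]
    simp only [smul_eq_mul, nsmul_eq_mul, add_tsub_cancel_right]
    ring

/-- Descending recurrence in `j` for the coefficients of `T ^ j / (1 - T)`, a substitute for Lagrange
inversion. -/
theorem coeff_T_pow_mul_P_step (n j : ℕ) :
    ((n : ℝ) - j) * PowerSeries.coeff n (T ^ j * P) =
      n * PowerSeries.coeff n (T ^ (j + 1) * P) := by
  have h := congrArg (PowerSeries.coeff n) (th_T_pow j)
  rw [coeff_th, ← map_natCast (PowerSeries.C (R := ℝ)), PowerSeries.coeff_C_mul] at h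
  have h2 : T ^ j = T ^ j * P - T ^ (j + 1) * P := by linear_combination -T ^ j * P_mul
  have h3 := congrArg (PowerSeries.coeff n) h2
  rw [map_sub] at h3
  rw [h3] at h
  linear_combination h

theorem coeff_zero_P : PowerSeries.coeff 0 P = 1 := by
  rw [P, map_add, coeff_th]; simp

/-- `T = X U` with `U` of constant coefficient one. -/
theorem exists_T_eq : ∃ U : PowerSeries ℝ, T = PowerSeries.X * U ∧ PowerSeries.coeff 0 U = 1 := by
  obtain ⟨U, hU⟩ := PowerSeries.X_dvd_iff.2
    (show PowerSeries.constantCoeff T = 0 by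
      rw [← PowerSeries.coeff_zero_eq_constantCoeff_apply]; exact coeff_T_zero)
  refine ⟨U, hU, ?_⟩
  have := coeff_T_one
  rwa [hU, show 1 = 0 + 1 from rfl, PowerSeries.coeff_succ_X_mul] at this

theorem coeff_T_pow_mul_P_self (n : ℕ) : PowerSeries.coeff n (T ^ n * P) = 1 := by
  obtain ⟨U, hU, h1⟩ := exists_T_eq
  rw [hU, mul_pow, mul_assoc]
  have := PowerSeries.coeff_X_pow_mul (U ^ n * P) n 0
  rw [zero_add] at this
  rw [this]
  rw [PowerSeries.coeff_zero_eq_constantCoeff_apply] at h1 ⊢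
  have h2 := coeff_zero_P
  rw [PowerSeries.coeff_zero_eq_constantCoeff_apply] at h2
  rw [map_mul, map_pow, h1, h2, one_pow, one_mul]

theorem coeff_T_pow_mul_P (n i : ℕ) (hi : i ≤ n) :
    PowerSeries.coeff n (T ^ (n - i) * P) = (n : ℝ) ^ i / i.factorial := by
  induction i with
  | zero => simpa using coeff_T_pow_mul_P_self n
  | succ i ih =>
    have h := coeff_T_pow_mul_P_step n (n - (i + 1))
    rw [show n - (i + 1) + 1 = n - i by omega, ih (by omega), Nat.cast_sub hi] at h
    rw [Nat.factorial_succ]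
    push_cast at h ⊢
    have hf : (i.factorial : ℝ) ≠ 0 := by positivity
    have h1 : ((i : ℝ) + 1) ≠ 0 := by positivity
    field_simp at h ⊢
    linear_combination h

theorem coeff_P (n : ℕ) : PowerSeries.coeff n P = (n : ℝ) ^ n / n.factorial := by
  simpa using coeff_T_pow_mul_P n n le_rfl

/-- Truncated geometric expansion of `P ^ 2 = P / (1 - T)`. -/
theorem P_sq_eq (N : ℕ) : P ^ 2 = ∑ j ∈ Finset.range N, T ^ j * P + T ^ N * P ^ 2 := by
  induction N with
  | zero => simp
  | succ N ih =>
    rw [Finset.sum_range_succ]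
    linear_combination ih + T ^ N * P * P_mul

theorem coeff_P_sq (n : ℕ) : PowerSeries.coeff n (P ^ 2) =
    ∑ i ∈ Finset.range (n + 1), (n : ℝ) ^ i / i.factorial := by
  obtain ⟨U, hU, -⟩ := exists_T_eq
  have h0 : PowerSeries.coeff n (T ^ (n + 1) * P ^ 2) = 0 := by
    rw [hU, mul_pow, mul_assoc, PowerSeries.coeff_X_pow_mul', if_neg (by omega)]
  rw [P_sq_eq (n + 1), map_add, h0, add_zero, map_sum, ← Finset.sum_range_reflect]
  refine Finset.sum_congr rfl fun i hi => ?_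
  rw [Finset.mem_range] at hi
  rw [show n + 1 - 1 - i = n - i by omega]
  exact coeff_T_pow_mul_P n i (by omega)

/-! ### The second power by the Laplace method -/

/-- This is `log y ≤ sinh (log y)` for `y = 1 + t`. -/
theorem log_one_add_le {t : ℝ} (ht : 0 ≤ t) : Real.log (1 + t) ≤ t - t ^ 2 / (2 * (1 + t)) := by
  have h := Real.self_le_sinh_iff.2 (Real.log_nonneg (by linarith : (1 : ℝ) ≤ 1 + t))
  rw [Real.sinh_log (by linarith)] at h
  refine h.trans (le_of_eq ?_)
  field_simp
  ring

/-- The integrand `(1 + u / √n) ^ n * exp (- u √n)`, which converges to `exp (- u ^ 2 / 2)`.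
Its integral over `u > 0` is the normalised coefficient of `P ^ 2`, see `integral_lapl`. -/
noncomputable def lapl (n : ℕ) (u : ℝ) : ℝ :=
  (1 + u / √n) ^ n * Real.exp (-(√n * u))

theorem lapl_eq {n : ℕ} (hn : 0 < n) {u : ℝ} (hu : 0 < u) :
    lapl n u = Real.exp (n * Real.log (1 + u / √n) - √n * u) := by
  have hr : 0 < √(n : ℝ) := Real.sqrt_pos.2 (by exact_mod_cast hn)
  have h1 : 0 < 1 + u / √n := by positivity
  rw [lapl, Real.exp_sub, Real.exp_neg, Real.exp_nat_mul, Real.exp_log h1]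
  exact (div_eq_mul_inv _ _).symm

theorem lapl_le {n : ℕ} (hn : 0 < n) {u : ℝ} (hu : 0 < u) :
    lapl n u ≤ Real.exp (-(u ^ 2 / (2 * (1 + u / √n)))) := by
  have hr : 0 < √(n : ℝ) := Real.sqrt_pos.2 (by exact_mod_cast hn)
  have hs : √(n : ℝ) ^ 2 = n := Real.sq_sqrt n.cast_nonneg
  rw [lapl_eq hn hu, Real.exp_le_exp]
  have h := mul_le_mul_of_nonneg_left (log_one_add_le (div_pos hu hr).le) (n.cast_nonneg (α := ℝ))
  calc _ ≤ _ := sub_le_sub_right h _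
    _ = _ := by
      rw [← hs, Real.sqrt_sq hr.le]
      field_simp
      ring

theorem le_lapl {n : ℕ} (hn : 0 < n) {u : ℝ} (hu : 0 < u) :
    Real.exp (-(u ^ 2 / (u / √n + 2))) ≤ lapl n u := by
  have hr : 0 < √(n : ℝ) := Real.sqrt_pos.2 (by exact_mod_cast hn)
  have hs : √(n : ℝ) ^ 2 = n := Real.sq_sqrt n.cast_nonneg
  rw [lapl_eq hn hu, Real.exp_le_exp]
  have h := mul_le_mul_of_nonneg_left (Real.le_log_one_add_of_nonneg (div_pos hu hr).le)
    (n.cast_nonneg (α := ℝ))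
  refine le_trans (le_of_eq ?_) (sub_le_sub_right h _)
  rw [← hs, Real.sqrt_sq hr.le]
  field_simp
  ring

theorem lapl_bound {n : ℕ} (hn : 0 < n) {u : ℝ} (hu : 0 < u) :
    lapl n u ≤ Real.exp (1 / 2) * Real.exp (-(1 / 2) * u) := by
  refine (lapl_le hn hu).trans ?_
  rw [← Real.exp_add, Real.exp_le_exp]
  have hr : 1 ≤ √(n : ℝ) := Real.one_le_sqrt.2 (by exact_mod_cast hn)
  have h1 : u / √n ≤ u := div_le_self hu.le hr
  have h0 : 0 ≤ u / √n := by positivity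
  have h2 : u ^ 2 / (2 * (1 + u)) ≤ u ^ 2 / (2 * (1 + u / √n)) := by gcongr
  have h3 : (u - 1) / 2 ≤ u ^ 2 / (2 * (1 + u)) := by
    rw [div_le_div_iff₀ (by positivity) (by positivity)]
    nlinarith
  linarith

theorem lapl_tendsto {u : ℝ} (hu : 0 < u) :
    Tendsto (fun n => lapl n u) atTop (nhds (Real.exp (-(1 / 2) * u ^ 2))) := by
  have hd : Tendsto (fun n : ℕ => u / √(n : ℝ)) atTop (nhds 0) :=
    Tendsto.div_atTop tendsto_const_nhds
      (Real.tendsto_sqrt_atTop.comp tendsto_natCast_atTop_atTop)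
  refine tendsto_of_tendsto_of_tendsto_of_le_of_le'
    (g := fun n : ℕ => Real.exp (-(u ^ 2 / (u / √n + 2))))
    (h := fun n : ℕ => Real.exp (-(u ^ 2 / (2 * (1 + u / √n))))) ?_ ?_ ?_ ?_
  · refine (Real.continuous_exp.tendsto _).comp ?_
    have h := (tendsto_const_nhds (x := u ^ 2)).div (hd.add_const 2) (by norm_num)
    convert h.neg using 2
    norm_num
    ring
  · refine (Real.continuous_exp.tendsto _).comp ?_
    have h := (tendsto_const_nhds (x := u ^ 2)).div ((hd.const_add 1).const_mul 2) (by norm_num)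
    convert h.neg using 2
    norm_num
    ring
  · filter_upwards [eventually_gt_atTop 0] with n hn using le_lapl hn hu
  · filter_upwards [eventually_gt_atTop 0] with n hn using lapl_le hn hu

theorem tendsto_integral_lapl :
    Tendsto (fun n => ∫ u in Set.Ioi (0 : ℝ), lapl n u) atTop (nhds √(π / 2)) := by
  have hg : ∫ u in Set.Ioi (0 : ℝ), Real.exp (-(1 / 2) * u ^ 2) = √(π / 2) := by
    rw [integral_gaussian_Ioi, show π / (1 / 2) = 2 ^ 2 * (π / 2) by ring, Real.sqrt_mul' _
      (by positivity), Real.sqrt_sq (by norm_num)]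
    ring
  rw [← hg]
  refine MeasureTheory.tendsto_integral_filter_of_dominated_convergence
    (fun u => Real.exp (1 / 2) * Real.exp (-(1 / 2) * u)) ?_ ?_ ?_ ?_
  · refine Eventually.of_forall fun n => Continuous.aestronglyMeasurable ?_
    unfold lapl
    fun_prop
  · filter_upwards [eventually_gt_atTop 0] with n hn
    refine (MeasureTheory.ae_restrict_iff' measurableSet_Ioi).2 (Eventually.of_forall ?_)
    intro u hu
    rw [Real.norm_of_nonneg]
    · exact lapl_bound hn hu
    · rw [lapl_eq hn hu]; positivity
  · exact (exp_neg_integrableOn_Ioi 0 (by norm_num)).const_mul _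
  · refine (MeasureTheory.ae_restrict_iff' measurableSet_Ioi).2 (Eventually.of_forall ?_)
    exact fun u hu => lapl_tendsto hu

theorem integral_pow_mul_exp {r : ℝ} (hr : 0 < r) (j : ℕ) :
    MeasureTheory.IntegrableOn (fun u : ℝ => u ^ j * Real.exp (-(r * u))) (Set.Ioi 0) ∧
    ∫ u in Set.Ioi (0 : ℝ), u ^ j * Real.exp (-(r * u)) = j.factorial / r ^ (j + 1) := by
  constructor
  · have h := integrableOn_rpow_mul_exp_neg_mul_rpow (p := 1) (s := j) (b := r)
      (by have := j.cast_nonneg (α := ℝ); linarith) one_pos hr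
    simpa only [Real.rpow_natCast, Real.rpow_one, neg_mul] using h
  · have h := Real.integral_rpow_mul_exp_neg_mul_Ioi (a := j + 1) (r := r) (by positivity) hr
    rw [Real.Gamma_nat_eq_factorial] at h
    simp only [add_sub_cancel_right, Real.rpow_natCast] at h
    rw [h, ← Nat.cast_add_one, Real.rpow_natCast, one_div, inv_pow]
    field_simp

/-- Expanding the binomial and integrating termwise gives the truncated exponential sum. -/
theorem integral_lapl {n : ℕ} (hn : 0 < n) : ∫ u in Set.Ioi (0 : ℝ), lapl n u =
    (∑ i ∈ Finset.range (n + 1), (n : ℝ) ^ i / i.factorial) * n.factorial / ((n : ℝ) ^ n * √n) := by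
  have hr : 0 < √(n : ℝ) := Real.sqrt_pos.2 (by exact_mod_cast hn)
  have hs : √(n : ℝ) ^ 2 = n := Real.sq_sqrt n.cast_nonneg
  have h : ∀ u, lapl n u = ∑ j ∈ Finset.range (n + 1),
      ((n.choose j : ℝ) / √n ^ j) * (u ^ j * Real.exp (-(√n * u))) := fun u => by
    rw [lapl, add_comm, add_pow, Finset.sum_mul]
    refine Finset.sum_congr rfl fun j _ => ?_
    rw [one_pow, div_pow]
    ring
  simp only [h]
  rw [MeasureTheory.integral_finsetSum _ fun j _ => (integral_pow_mul_exp hr j).1.const_mul _,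
    ← Finset.sum_range_reflect, Finset.sum_mul, Finset.sum_div]
  refine Finset.sum_congr rfl fun i hi => ?_
  rw [Finset.mem_range] at hi
  obtain ⟨j, rfl⟩ : ∃ j, n = i + j := ⟨n - i, by omega⟩
  rw [MeasureTheory.integral_const_mul, (integral_pow_mul_exp hr _).2,
    show i + j + 1 - 1 - i = j by omega]
  have e : ((i + j).factorial : ℝ) = (i + j).choose j * j.factorial * i.factorial := by
    have := Nat.choose_mul_factorial_mul_factorial (n := i + j) (k := j) (by omega)
    rw [← this, show i + j - j = i by omega]
    push_cast; ring
  rw [e]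
  have e2 : ((i + j : ℕ) : ℝ) ^ (i + j) = ((i + j : ℕ) : ℝ) ^ i * (√((i + j : ℕ) : ℝ) ^ 2) ^ j := by
    rw [hs, pow_add]
  rw [e2]
  have hn' : ((i + j : ℕ) : ℝ) ≠ 0 := by positivity
  field_simp
  ring

theorem tendsto_coeff_P_sq :
    Tendsto (fun n : ℕ => PowerSeries.coeff n (P ^ 2) * n.factorial / ((n : ℝ) ^ n * √n)) atTop
      (nhds √(π / 2)) := by
  refine tendsto_integral_lapl.congr' ?_
  filter_upwards [eventually_gt_atTop 0] with n hn
  rw [integral_lapl hn, coeff_P_sq]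

/-! ### Uniform asymptotics of the coefficients of `P ^ l` -/

/-- The constants with `[xⁿ] P ^ (l + 1) ~ (n ^ n / n!) * √n ^ l * nu l`. -/
noncomputable def nu : ℕ → ℝ
  | 0 => 1
  | 1 => √(π / 2)
  | (l + 2) => nu l / (l + 1)

theorem nu_pos : ∀ l, 0 < nu l
  | 0 => by rw [nu]; exact one_pos
  | 1 => by rw [nu]; positivity
  | (l + 2) => by rw [nu]; exact div_pos (nu_pos l) (by positivity)

/-- An upper bound of the right order for the ratio `nu (l + 1) / nu l`, which behaves like `1 / √l`. -/
theorem nu_step : ∀ l : ℕ, (l + 1) * nu (l + 1) ^ 2 ≤ 2 * nu l ^ 2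
  | 0 => by
    simp only [nu, Nat.cast_zero]
    rw [Real.sq_sqrt (by positivity)]
    linarith [Real.pi_le_four]
  | 1 => by
    simp only [nu, Nat.cast_zero]
    rw [Real.sq_sqrt (by positivity)]
    norm_num
    linarith [Real.pi_gt_three]
  | (l + 2) => by
    have h := nu_step l
    simp only [nu]
    push_cast
    rw [div_pow, div_pow]
    calc ((l : ℝ) + 2 + 1) * (nu (l + 1) ^ 2 / (l + 1 + 1) ^ 2)
        = (l + 3) / ((l + 2) ^ 2 * (l + 1)) * ((l + 1) * nu (l + 1) ^ 2) := by
          field_simp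
          ring
      _ ≤ (l + 3) / ((l + 2) ^ 2 * (l + 1)) * (2 * nu l ^ 2) := by gcongr
      _ = ((l + 3) * (l + 1) / (l + 2) ^ 2) * (2 * (nu l ^ 2 / (l + 1) ^ 2)) := by field_simp
      _ ≤ 1 * (2 * (nu l ^ 2 / (l + 1) ^ 2)) := by
          gcongr
          rw [div_le_one (by positivity)]
          nlinarith
      _ = _ := by ring

/-- The coefficient `[xⁿ] P ^ (l + 1)` divided by its leading order. -/
noncomputable def rho (n l : ℕ) : ℝ :=
  PowerSeries.coeff n (P ^ (l + 1)) * n.factorial / ((n : ℝ) ^ n * √n ^ l * nu l)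

theorem rho_zero {n : ℕ} (hn : 0 < n) : rho n 0 = 1 := by
  have : (n : ℝ) ≠ 0 := by positivity
  rw [rho, zero_add, pow_one, coeff_P, nu]
  field_simp

theorem rho_one_tendsto : Tendsto (fun n => rho n 1) atTop (nhds 1) := by
  have h := tendsto_coeff_P_sq.div_const √(π / 2)
  rw [div_self (by positivity)] at h
  refine h.congr fun n => ?_
  rw [rho, nu, pow_one, div_div]

theorem rho_nonneg (n l : ℕ) : 0 ≤ rho n l := by
  have := nu_pos l
  have := posP.pow (l + 1) n
  rw [rho]
  positivity

/-- The recurrence for the coefficients of `P ^ l`: consecutive terms of the same parity differ by a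
term of relative order `√(l / n)`. -/
theorem rho_rec {n : ℕ} (hn : 0 < n) (l : ℕ) :
    rho n (l + 2) = rho n l + ((l + 1) * nu (l + 1) / (√n * nu l)) * rho n (l + 1) := by
  have hr : 0 < √(n : ℝ) := Real.sqrt_pos.2 (by exact_mod_cast hn)
  have hs : √(n : ℝ) ^ 2 = n := Real.sq_sqrt n.cast_nonneg
  have h := coeff_P_pow_rec n (l + 1)
  have h0 := nu_pos l
  have h1 := nu_pos (l + 1)
  have hn' : (n : ℝ) ≠ 0 := by positivity
  simp only [rho, nu]
  have e : PowerSeries.coeff n (P ^ (l + 2 + 1)) = PowerSeries.coeff n (P ^ (l + 1 + 1)) +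
      √(n : ℝ) ^ 2 / (l + 1) * PowerSeries.coeff n (P ^ (l + 1)) := by
    rw [hs]
    push_cast at h
    rw [show l + 1 + 2 = l + 2 + 1 by ring] at h
    field_simp
    linear_combination -h
  rw [e]
  field_simp
  ring

theorem nu_ratio_le {n l L : ℕ} (hn : 0 < n) (hl : l < L) :
    (l + 1) * nu (l + 1) / (√n * nu l) ≤ √(2 * L / n) := by
  have hs : √(n : ℝ) ^ 2 = n := Real.sq_sqrt n.cast_nonneg
  have h0 := nu_pos l
  have h1 := nu_pos (l + 1)
  apply Real.le_sqrt_of_sq_le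
  have hl' : (l : ℝ) + 1 ≤ L := by exact_mod_cast hl
  rw [div_pow, mul_pow, mul_pow, hs]
  rw [div_le_div_iff₀ (by positivity) (by positivity)]
  calc ((l : ℝ) + 1) ^ 2 * nu (l + 1) ^ 2 * n = ((l + 1) * nu (l + 1) ^ 2) * ((l + 1) * n) := by ring
    _ ≤ (2 * nu l ^ 2) * (L * n) := 
        mul_le_mul (nu_step l) (by gcongr) (by positivity) (by positivity)
    _ = _ := by ring

theorem le_rho {n : ℕ} (hn : 0 < n) (l : ℕ) : min 1 (rho n 1) ≤ rho n l := by
  induction l using Nat.twoStepInduction with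
  | zero => rw [rho_zero hn]; exact min_le_left _ _
  | one => exact min_le_right _ _
  | more l ih _ =>
    rw [rho_rec hn]
    have := nu_pos l
    have := nu_pos (l + 1)
    have := rho_nonneg n (l + 1)
    have : 0 ≤ ((l + 1) * nu (l + 1) / (√n * nu l)) * rho n (l + 1) := by positivity
    linarith

theorem rho_le {n L : ℕ} (hn : 0 < n) (l : ℕ) (hl : l ≤ L) :
    rho n l ≤ max 1 (rho n 1) * (1 + √(2 * L / n)) ^ l := by
  set M := max 1 (rho n 1) with hM
  have hM0 : 0 ≤ M := zero_le_one.trans (le_max_left _ _)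
  set δ := √(2 * L / n) with hδ
  have hδ0 : 0 ≤ δ := Real.sqrt_nonneg _
  induction l using Nat.twoStepInduction with
  | zero => rw [rho_zero hn, pow_zero, mul_one]; exact le_max_left _ _
  | one =>
    rw [pow_one]
    calc rho n 1 ≤ M := le_max_right _ _
      _ ≤ M * (1 + δ) := by nlinarith
  | more l ih0 ih1 =>
    rw [rho_rec hn]
    have h1 := mul_le_mul (nu_ratio_le hn (show l < L by omega)) (ih1 (by omega)) (rho_nonneg _ _)
      hδ0
    have h2 : 0 ≤ M * (1 + δ) ^ l * δ := by positivity
    calc _ ≤ M * (1 + δ) ^ l + δ * (M * (1 + δ) ^ (l + 1)) := add_le_add (ih0 (by omega)) h1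
      _ = M * (1 + δ) ^ (l + 2) - M * (1 + δ) ^ l * δ := by ring
      _ ≤ _ := by linarith

/-- Uniform asymptotics of the coefficients of powers of `P`. -/
theorem rho_tendsto {l : ℕ → ℕ} (hl : Tendsto (fun n : ℕ => (l n : ℝ) ^ 3 / n) atTop (nhds 0)) :
    Tendsto (fun n => rho n (l n)) atTop (nhds 1) := by
  refine tendsto_of_tendsto_of_tendsto_of_le_of_le' (g := fun n => min 1 (rho n 1))
    (h := fun n => max 1 (rho n 1) * Real.exp √(2 * ((l n : ℝ) ^ 3 / n))) ?_ ?_ ?_ ?_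
  · simpa using (tendsto_const_nhds (x := (1 : ℝ))).min rho_one_tendsto
  · have h1 := (tendsto_const_nhds (x := (1 : ℝ))).max rho_one_tendsto
    have h2 := (Real.continuous_exp.tendsto _).comp
      ((Real.continuous_sqrt.tendsto _).comp (hl.const_mul 2))
    simpa using h1.mul h2
  · filter_upwards [eventually_gt_atTop 0] with n hn using le_rho hn _
  · filter_upwards [eventually_gt_atTop 0] with n hn
    refine (rho_le hn (l n) le_rfl).trans ?_
    refine mul_le_mul_of_nonneg_left ?_ (zero_le_one.trans (le_max_left _ _))
    have e : √(2 * ((l n : ℝ) ^ 3 / n)) = l n * √(2 * l n / n) := by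
      rw [show 2 * ((l n : ℝ) ^ 3 / n) = (l n : ℝ) ^ 2 * (2 * l n / n) by ring,
        Real.sqrt_mul (by positivity), Real.sqrt_sq (by positivity)]
    rw [e, Real.exp_nat_mul]
    refine pow_le_pow_left₀ (by positivity) ?_ _
    rw [add_comm]
    exact Real.add_one_le_exp _

/-- Passing from `P ^ (l + 1)` to `P ^ (l + 2)` gains a factor at least `√(n / (2 l))`. -/
theorem nu_le_nu_succ (l : ℕ) : nu l ^ 2 ≤ 2 * (l + 1) * nu (l + 1) ^ 2 := by
  have h := nu_step (l + 1)
  rw [nu] at h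
  push_cast at h
  rw [div_pow] at h
  have h1 : nu l ^ 2 = (l + 1) ^ 2 / (l + 1 + 1) * ((l + 1 + 1) * (nu l ^ 2 / (l + 1) ^ 2)) := by
    field_simp
  rw [h1]
  calc _ ≤ ((l : ℝ) + 1) ^ 2 / (l + 1 + 1) * (2 * nu (l + 1) ^ 2) := by gcongr
    _ ≤ (l + 1) * (2 * nu (l + 1) ^ 2) := by
      gcongr
      rw [div_le_iff₀ (by positivity)]
      nlinarith
    _ = _ := by ring

/-! ### Growth of the sequence `a` -/

/-- Coefficients of the hypergeometric series `₂F₀(1/6, 5/6; 3 z / 2)` (of Airy type) whose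
logarithmic derivative generates the sequence `a`. -/
noncomputable def f : ℕ → ℝ
  | 0 => 1
  | (n + 1) => f n * (3 / 2 * (n + 1 / 6) * (n + 5 / 6) / (n + 1))

theorem f_pos : ∀ n, 0 < f n
  | 0 => by rw [f]; exact one_pos
  | (n + 1) => by rw [f]; have := f_pos n; positivity

theorem f_succ (n : ℕ) : f (n + 1) =
    (3 / 2) ^ (n + 1) * (∏ j ∈ Finset.range (n + 1), ((1 / 6 : ℝ) + j)) *
      (∏ j ∈ Finset.range (n + 1), ((5 / 6 : ℝ) + j)) / (n + 1).factorial := by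
  induction n with
  | zero => simp [f]
  | succ n ih =>
    rw [f, ih, Finset.prod_range_succ _ (n + 1), Finset.prod_range_succ _ (n + 1),
      Nat.factorial_succ (n + 1)]
    push_cast
    field_simp
    ring

/-- `f` normalised by its growth; the index is shifted since `f (n + 1)` grows like `n!`. -/
noncomputable def fr (n : ℕ) : ℝ := f (n + 1) / ((3 / 2) ^ (n + 1) * n.factorial)

theorem fr_mono : Monotone fr := by
  refine monotone_nat_of_le_succ fun n => ?_
  have h := f_pos (n + 1)
  have e : fr (n + 1) = fr n * (((n + 1 + 1 / 6) * (n + 1 + 5 / 6)) / ((n + 1) * (n + 2))) := by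
    rw [fr, f, fr, Nat.factorial_succ]
    push_cast
    field_simp
    ring
  have h0 : 0 ≤ fr n := by rw [fr]; positivity
  rw [e]
  refine le_mul_of_one_le_right h0 ?_
  rw [one_le_div (by positivity)]
  nlinarith

/-- The two shifted factorials are expressed by Euler's limit for `Γ(1/6)` and `Γ(5/6)`, whose product
is `2 π` by the reflection formula. -/
theorem fr_tendsto : Tendsto fr atTop (nhds (1 / (2 * π))) := by
  have h := (Real.GammaSeq_tendsto_Gamma (1 / 6)).mul (Real.GammaSeq_tendsto_Gamma (5 / 6))
  have hG : Real.Gamma (1 / 6) * Real.Gamma (5 / 6) = 2 * π := by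
    have := Real.Gamma_mul_Gamma_one_sub (1 / 6)
    rw [show (1 : ℝ) - 1 / 6 = 5 / 6 by norm_num, show π * (1 / 6) = π / 6 by ring,
      Real.sin_pi_div_six] at this
    rw [this]; ring
  rw [hG] at h
  have h2 := (tendsto_natCast_div_add_atTop (1 : ℝ)).div h (by positivity)
  refine h2.congr' ?_
  filter_upwards [eventually_gt_atTop 0] with n hn
  have hn' : (n : ℝ) ≠ 0 := by positivity
  simp only [Pi.div_apply]
  rw [fr, f_succ, Real.GammaSeq, Real.GammaSeq, Nat.factorial_succ]
  have e : (n : ℝ) ^ (1 / 6 : ℝ) * (n : ℝ) ^ (5 / 6 : ℝ) = n := by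
    rw [← Real.rpow_add (by positivity)]; norm_num
  have p1 : ∏ j ∈ Finset.range (n + 1), ((1 / 6 : ℝ) + j) ≠ 0 :=
    Finset.prod_ne_zero_iff.2 fun j _ => by positivity
  have p2 : ∏ j ∈ Finset.range (n + 1), ((5 / 6 : ℝ) + j) ≠ 0 :=
    Finset.prod_ne_zero_iff.2 fun j _ => by positivity
  have q1 : (n : ℝ) ^ (1 / 6 : ℝ) ≠ 0 := by positivity
  have q2 : (n : ℝ) ^ (5 / 6 : ℝ) ≠ 0 := by positivity
  push_cast
  field_simp
  linear_combination -e

theorem fr_le (n : ℕ) : fr n ≤ 1 := by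
  refine (fr_mono.ge_of_tendsto fr_tendsto n).trans ?_
  rw [div_le_one (by positivity)]
  linarith [Real.pi_gt_three]

theorem f_le (n : ℕ) : f (n + 1) ≤ (3 / 2) ^ (n + 1) * n.factorial := by
  have := fr_le n
  rwa [fr, div_le_one (by positivity)] at this

/-- The formal power series with coefficients `f`; it has radius of convergence zero. -/
noncomputable def Fs : PowerSeries ℝ := PowerSeries.mk f

/-- The hypergeometric differential equation. -/
theorem Fs_ode : th Fs = PowerSeries.X * (PowerSeries.C (3 / 2) *
    (th (th Fs) + th Fs + PowerSeries.C (5 / 36) * Fs)) := by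
  ext n
  rcases n with _ | n
  · rw [coeff_th]; simp
  · rw [PowerSeries.coeff_succ_X_mul, PowerSeries.coeff_C_mul, map_add, map_add,
      PowerSeries.coeff_C_mul, coeff_th, coeff_th, coeff_th, Fs, PowerSeries.coeff_mk,
      PowerSeries.coeff_mk, f]
    push_cast
    field_simp
    ring

theorem Fs_ne_zero : Fs ≠ 0 := fun h => by
  have := congrArg (PowerSeries.coeff 0) h
  rw [Fs, PowerSeries.coeff_mk, f] at this
  simp at this

/-- The logarithmic derivative of `Fs`. -/
noncomputable def Bs : PowerSeries ℝ := Fs⁻¹ * th Fs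

theorem Fs_mul_Bs : Fs * Bs = th Fs := by
  rw [Bs, ← mul_assoc, PowerSeries.mul_inv_cancel, one_mul]
  rw [← PowerSeries.coeff_zero_eq_constantCoeff_apply, Fs, PowerSeries.coeff_mk, f]
  exact one_ne_zero

theorem Bs_riccati : Bs = PowerSeries.X * (PowerSeries.C (3 / 2) *
    (th Bs + Bs * Bs + Bs + PowerSeries.C (5 / 36))) := by
  apply mul_left_cancel₀ Fs_ne_zero
  have h := Fs_ode
  have h2 : th (th Fs) = Fs * (Bs * Bs + th Bs) := by
    rw [← Fs_mul_Bs, Derivation.leibniz, ← Fs_mul_Bs, smul_eq_mul, smul_eq_mul]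
    ring
  rw [h2, ← Fs_mul_Bs] at h
  linear_combination h

theorem Bs_zero : PowerSeries.coeff 0 Bs = 0 := by
  rw [Bs_riccati]; simp

theorem Bs_succ (n : ℕ) : PowerSeries.coeff (n + 1) Bs = 3 / 2 * ((n + 1) * PowerSeries.coeff n Bs
    + ∑ i ∈ Finset.range (n + 1), PowerSeries.coeff i Bs * PowerSeries.coeff (n - i) Bs
    + if n = 0 then 5 / 36 else 0) := by
  conv_lhs => rw [Bs_riccati]
  rw [PowerSeries.coeff_succ_X_mul, PowerSeries.coeff_C_mul, map_add, map_add, map_add, coeff_th,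
    PowerSeries.coeff_mul, Finset.Nat.sum_antidiagonal_eq_sum_range_succ_mk, PowerSeries.coeff_C]
  ring

/-- The Riccati equation for `Bs` is the recursion for `a`. -/
theorem Bs_eq (n : ℕ) : PowerSeries.coeff (n + 1) Bs = a (n + 2) / 3 := by
  induction n using Nat.strong_induction_on with
  | _ n ih =>
  rw [Bs_succ]
  rcases n with _ | n
  · have := a_rec 0
    simp [a_one] at this
    simp [Bs_zero]
    linarith
  · have h := a_rec (n + 1)
    rw [Finset.sum_range_succ, Finset.sum_range_succ'] at h ⊢
    have e : ∑ i ∈ Finset.range n, PowerSeries.coeff (i + 1) Bs *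
        PowerSeries.coeff (n + 1 - (i + 1)) Bs =
        ∑ i ∈ Finset.range n, (a (i + 1 + 1) * a (n + 1 + 1 - (i + 1))) / 9 := by
      refine Finset.sum_congr rfl fun i hi => ?_
      rw [Finset.mem_range] at hi
      obtain ⟨j, rfl⟩ : ∃ j, n = i + 1 + j := ⟨n - (i + 1), by omega⟩
      rw [ih i (by omega), show i + 1 + j + 1 - (i + 1) = j + 1 by omega, ih j (by omega),
        show i + 1 + j + 1 + 1 - (i + 1) = j + 2 by omega]
      ring
    rw [e, ih n (by omega), Bs_zero, ← Finset.sum_div]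
    simp only [Nat.sub_self, Bs_zero, if_neg (Nat.succ_ne_zero n)]
    rw [show n + 1 + 1 - (n + 1) = 1 by omega, zero_add, a_one] at h
    push_cast at h ⊢
    linear_combination -h / 6

/-- The linearised recursion for `a`. -/
theorem f_conv (n : ℕ) : (n + 1) * f (n + 1) = a (n + 2) / 3 +
    ∑ i ∈ Finset.range n, a (i + 2) / 3 * f (n - i) := by
  have h := congrArg (PowerSeries.coeff (n + 1)) Fs_mul_Bs
  rw [mul_comm, PowerSeries.coeff_mul, Finset.Nat.sum_antidiagonal_eq_sum_range_succ_mk, coeff_th,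
    Finset.sum_range_succ', Finset.sum_range_succ] at h
  simp only [Bs_zero, Bs_eq, Fs, PowerSeries.coeff_mk, Nat.sub_self, Nat.add_sub_add_right, f]
    at h
  push_cast at h
  rw [f]
  linarith

theorem a_le_f (n : ℕ) : a (n + 2) / 3 ≤ (n + 1) * f (n + 1) := by
  rw [f_conv]
  have : 0 ≤ ∑ i ∈ Finset.range n, a (i + 2) / 3 * f (n - i) :=
    Finset.sum_nonneg fun i _ => mul_nonneg (div_nonneg (a_pos _).le (by norm_num)) (f_pos _).le
  linarith

theorem factorial_mul_le (i j : ℕ) : (i + 1).factorial * (j + 1).factorial ≤ (i + j + 1).factorial := by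
  induction j with
  | zero => simp
  | succ j ih =>
    rw [Nat.factorial_succ (j + 1), show i + (j + 1) + 1 = (i + j + 1) + 1 by ring,
      Nat.factorial_succ (i + j + 1)]
    calc _ = (j + 1 + 1) * ((i + 1).factorial * (j + 1).factorial) := by ring
      _ ≤ (i + j + 1 + 1) * (i + j + 1).factorial := Nat.mul_le_mul (by omega) ih

theorem sum_factorial_le (n : ℕ) :
    ∑ i ∈ Finset.range (n + 1), i.factorial * (n - i).factorial ≤ 3 * n.factorial := by
  rcases n with _ | n
  · simp
  · rw [Finset.sum_range_succ, Finset.sum_range_succ']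
    have : ∑ i ∈ Finset.range n, (i + 1).factorial * (n + 1 - (i + 1)).factorial ≤
        ∑ i ∈ Finset.range n, n.factorial := by
      refine Finset.sum_le_sum fun i hi => ?_
      rw [Finset.mem_range] at hi
      obtain ⟨j, rfl⟩ : ∃ j, n = i + 1 + j := ⟨n - (i + 1), by omega⟩
      rw [show i + 1 + j + 1 - (i + 1) = j + 1 by omega, show i + 1 + j = i + j + 1 by ring]
      exact factorial_mul_le i j
    rw [Finset.sum_const, Finset.card_range, smul_eq_mul] at this
    simp only [Nat.sub_self, tsub_zero, Nat.factorial_zero, Nat.factorial_succ n]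
    nlinarith

/-- As the coefficients `f` grow factorially, the convolution in `f_conv` is of lower order by a factor
`n` than its extreme term. -/
theorem f_sub_le_a (n : ℕ) : (n + 2) * f (n + 2) - 3 * ((n + 2) * ((3 / 2) ^ (n + 2) * n.factorial))
    ≤ a (n + 3) / 3 := by
  have h := f_conv (n + 1)
  have h2 : ∑ i ∈ Finset.range (n + 1), a (i + 2) / 3 * f (n + 1 - i) ≤
      ∑ i ∈ Finset.range (n + 1), ((n + 2) * (3 / 2) ^ (n + 2)) *
        ((i.factorial * (n - i).factorial : ℕ) : ℝ) := by
    refine Finset.sum_le_sum fun i hi => ?_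
    rw [Finset.mem_range] at hi
    obtain ⟨j, rfl⟩ : ∃ j, n = i + j := ⟨n - i, by omega⟩
    rw [show i + j + 1 - i = j + 1 by omega, show i + j - i = j by omega]
    calc a (i + 2) / 3 * f (j + 1) ≤ ((i + 1) * ((3 / 2) ^ (i + 1) * i.factorial)) *
          ((3 / 2) ^ (j + 1) * j.factorial) := by
          refine mul_le_mul ((a_le_f i).trans ?_) (f_le j) (f_pos _).le (by positivity)
          gcongr
          exact f_le i
      _ = (i + 1) * ((3 / 2) ^ (i + j + 2) * (i.factorial * j.factorial)) := by ring
      _ ≤ ((i + j : ℕ) + 2) * ((3 / 2) ^ (i + j + 2) * (i.factorial * j.factorial)) := by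
          gcongr
          · have : (0 : ℝ) ≤ j := j.cast_nonneg
            linarith
          · norm_num
      _ = _ := by push_cast; ring
  rw [← Finset.mul_sum, ← Nat.cast_sum] at h2
  have h3 : ((∑ i ∈ Finset.range (n + 1), i.factorial * (n - i).factorial : ℕ) : ℝ) ≤
      3 * n.factorial := by exact_mod_cast sum_factorial_le n
  have h4 := mul_le_mul_of_nonneg_left h3 (by positivity : (0 : ℝ) ≤ (n + 2) * (3 / 2) ^ (n + 2))
  push_cast at h h2 h4
  rw [show (n : ℝ) + 1 + 1 = n + 2 by ring] at h
  linarith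

/-- The sequence `a` normalised by its growth. -/
noncomputable def ar (n : ℕ) : ℝ := a (n + 1) / ((3 / 2) ^ n * n.factorial)

theorem ar_pos (n : ℕ) : 0 < ar n := by rw [ar]; have := a_pos n; positivity

theorem ar_tendsto : Tendsto ar atTop (nhds (3 / (2 * π))) := by
  rw [← tendsto_add_atTop_iff_nat 2]
  have h1 : Tendsto (fun n => 3 * fr (n + 1)) atTop (nhds (3 / (2 * π))) := by
    have := ((tendsto_add_atTop_iff_nat 1).2 fr_tendsto).const_mul 3
    rwa [mul_one_div] at this
  have h2 : Tendsto (fun n : ℕ => 3 * fr (n + 1) - 9 * (1 / ((n : ℝ) + 1))) atTop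
      (nhds (3 / (2 * π))) := by
    simpa using h1.sub (tendsto_one_div_add_atTop_nhds_zero_nat.const_mul 9)
  refine tendsto_of_tendsto_of_tendsto_of_le_of_le h2 h1 (fun n => ?_) (fun n => ?_)
  · have h := f_sub_le_a n
    simp only [ar, fr]
    rw [le_div_iff₀ (by positivity)]
    have e : (3 * (f (n + 1 + 1) / ((3 / 2) ^ (n + 1 + 1) * (n + 1).factorial))
        - 9 * (1 / ((n : ℝ) + 1))) * ((3 / 2) ^ (n + 2) * (n + 2).factorial) =
        3 * ((n + 2) * f (n + 2) - 3 * ((n + 2) * ((3 / 2) ^ (n + 2) * n.factorial))) := by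
      rw [Nat.factorial_succ (n + 1), Nat.factorial_succ n]
      push_cast
      field_simp
      ring
    rw [e]
    linarith
  · have h := a_le_f (n + 1)
    simp only [ar, fr]
    rw [div_le_iff₀ (by positivity)]
    have e : 3 * (f (n + 1 + 1) / ((3 / 2) ^ (n + 1 + 1) * (n + 1).factorial))
        * ((3 / 2) ^ (n + 2) * (n + 2).factorial) = 3 * ((n + 2) * f (n + 2)) := by
      rw [Nat.factorial_succ (n + 1)]
      push_cast
      field_simp
      ring
    rw [e]
    push_cast at h
    linarith

/-- The growth hypothesis of `lower`. -/
theorem exists_a_step : ∃ D : ℝ, 0 ≤ D ∧ ∀ m : ℕ, a (m + 2) ≤ D * (m + 2) * a (m + 1) := by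
  have h := ((tendsto_add_atTop_iff_nat 1).2 ar_tendsto).div ar_tendsto (by positivity)
  obtain ⟨D, hD⟩ := h.bddAbove_range
  have hD' : ∀ n, ar (n + 1) / ar n ≤ D := fun n => hD ⟨n, rfl⟩
  have hD0 : 0 ≤ D := (div_nonneg (ar_pos 1).le (ar_pos 0).le).trans (hD' 0)
  refine ⟨3 / 2 * D, by positivity, fun m => ?_⟩
  have h1 := hD' m
  rw [div_le_iff₀ (ar_pos m), ar, ar, Nat.factorial_succ, div_le_iff₀ (by positivity)] at h1
  have e : D * (a (m + 1) / ((3 / 2) ^ m * m.factorial)) *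
      ((3 / 2) ^ (m + 1) * ((m + 1) * m.factorial : ℕ)) = 3 / 2 * D * (m + 1) * a (m + 1) := by
    push_cast
    field_simp
    ring
  rw [e] at h1
  refine h1.trans ?_
  have := a_pos m
  gcongr
  norm_num

/-! ### The constant depending on the excess -/

theorem nu_mul_succ (l : ℕ) : nu l * nu (l + 1) = √(π / 2) / l.factorial := by
  induction l with
  | zero => simp [nu]
  | succ l ih =>
    rw [nu, Nat.factorial_succ]
    push_cast
    rw [mul_div_assoc', mul_comm (nu (l + 1)), ih]
    field_simp

theorem nu_even (j : ℕ) : nu (2 * j) = 2 ^ j * j.factorial / (2 * j).factorial := by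
  induction j with
  | zero => simp [nu]
  | succ j ih =>
    rw [show 2 * (j + 1) = 2 * j + 2 by ring, nu, ih, Nat.factorial_succ (2 * j + 1),
      Nat.factorial_succ (2 * j), Nat.factorial_succ j]
    push_cast
    field_simp
    ring

/-- `nu l ^ 4` normalised by its growth. -/
noncomputable def nr (l : ℕ) : ℝ := nu l ^ 4 * l.factorial ^ 2 / (l + 1)

theorem nr_even (j : ℕ) : nr (2 * j) = Real.Wallis.W j := by
  rw [Real.Wallis.W_eq_factorial_ratio, nr, nu_even]
  push_cast
  field_simp
  rw [pow_mul, ← pow_mul, mul_comm j, pow_mul]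

theorem nr_odd (j : ℕ) : nr (2 * j + 1) =
    (π / 2) ^ 2 * (1 - 1 / 2 * (1 / ((j : ℝ) + 1))) / Real.Wallis.W j := by
  have hW := Real.Wallis.W_pos j
  rw [eq_div_iff hW.ne', ← nr_even, nr, nr]
  have h := nu_mul_succ (2 * j)
  have h2 : √(π / 2) ^ 2 = π / 2 := Real.sq_sqrt (by positivity)
  have e : nu (2 * j) ^ 4 * nu (2 * j + 1) ^ 4 = (π / 2) ^ 2 / (2 * j).factorial ^ 4 := by
    rw [← mul_pow, h, div_pow, show √(π / 2) ^ 4 = (√(π / 2) ^ 2) ^ 2 by ring, h2]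
  rw [Nat.factorial_succ (2 * j)]
  push_cast
  calc _ = (nu (2 * j) ^ 4 * nu (2 * j + 1) ^ 4) * ((2 * j).factorial ^ 4 * (2 * j + 1) /
          (2 * j + 1 + 1)) := by field_simp
    _ = _ := by
      rw [e]
      field_simp
      ring

theorem tendsto_of_even_odd' {u : ℕ → ℝ} {x : ℝ} (h0 : Tendsto (fun j => u (2 * j)) atTop (nhds x))
    (h1 : Tendsto (fun j => u (2 * j + 1)) atTop (nhds x)) : Tendsto u atTop (nhds x) := by
  intro s hs
  obtain ⟨A, hA⟩ := mem_atTop_sets.1 (h0 hs)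
  obtain ⟨B, hB⟩ := mem_atTop_sets.1 (h1 hs)
  refine mem_atTop_sets.2 ⟨2 * A + 2 * B + 1, fun l hl => ?_⟩
  obtain ⟨j, rfl | rfl⟩ := Nat.even_or_odd' l
  · exact hA j (by omega)
  · exact hB j (by omega)

theorem nr_tendsto : Tendsto nr atTop (nhds (π / 2)) := by
  refine tendsto_of_even_odd' ?_ ?_
  · simpa only [nr_even] using Real.Wallis.tendsto_W_nhds_pi_div_two
  · simp only [nr_odd]
    have h := (((tendsto_one_div_add_atTop_nhds_zero_nat (𝕜 := ℝ)).const_mul (1 / 2)).const_sub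
      1).const_mul ((π / 2) ^ 2)
    have h2 := h.div Real.Wallis.tendsto_W_nhds_pi_div_two (by positivity)
    have e : (π / 2) ^ 2 * (1 - 1 / 2 * 0) / (π / 2) = π / 2 := by field_simp; ring
    rwa [e] at h2

theorem factorial_eq_stirling {n : ℕ} (hn : 0 < n) :
    (n.factorial : ℝ) = Stirling.stirlingSeq n * (√(2 * n) * (n / Real.exp 1) ^ n) := by
  rw [Stirling.stirlingSeq, div_mul_cancel₀]
  positivity

/-- Stirling's formula applied to `(m + 1)!` and `(3 (m + 1))!`. The fourth power removes all square roots. -/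
theorem four_pow_eq (m : ℕ) : (a (m + 1) * nu (3 * m + 1)) ^ 4 =
    ((Real.exp 1 / (12 * (m + 1))) ^ (m + 1) * (9 / π) * (m + 1)) ^ 2 *
    (ar m ^ 4 * nr (3 * m + 1) * Stirling.stirlingSeq (m + 1) ^ 4 /
      Stirling.stirlingSeq (3 * (m + 1)) ^ 2 * (32 / 2187 * π ^ 2)
      * (3 - 1 / ((m : ℝ) + 1)) ^ 3) := by
  have h1 := factorial_eq_stirling (Nat.succ_pos m)
  have h2 := factorial_eq_stirling (show 0 < 3 * (m + 1) by omega)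
  have hS : Stirling.stirlingSeq (3 * (m + 1)) ≠ 0 := by
    rw [Stirling.stirlingSeq]; positivity
  have ha : a (m + 1) = ar m * ((3 / 2) ^ m * m.factorial) := by
    rw [ar, div_mul_cancel₀]; positivity
  have hn : nu (3 * m + 1) ^ 4 = nr (3 * m + 1) * (3 * m + 2) / (3 * m + 1).factorial ^ 2 := by
    rw [nr]
    push_cast
    field_simp
    ring
  set S := Stirling.stirlingSeq (m + 1)
  set S3 := Stirling.stirlingSeq (3 * (m + 1))
  rw [mul_pow, hn, ha]
  have hm : (m.factorial : ℝ) = (m + 1).factorial / (m + 1) := by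
    rw [Nat.factorial_succ]; push_cast; field_simp
  have h3m : ((3 * m + 1).factorial : ℝ) = (3 * (m + 1)).factorial / ((3 * m + 2) * (3 * m + 3)) := by
    rw [show 3 * (m + 1) = (3 * m + 1) + 1 + 1 by ring, Nat.factorial_succ (3 * m + 1 + 1),
      Nat.factorial_succ (3 * m + 1)]
    push_cast; field_simp; ring
  rw [hm, h3m, h1, h2]
  have q1 : √(2 * ((m + 1 : ℕ) : ℝ)) ^ 4 = (2 * (m + 1)) ^ 2 := by
    rw [show 4 = 2 * 2 from rfl, pow_mul, Real.sq_sqrt (by positivity)]; push_cast; ring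
  have q2 : √(2 * ((3 * (m + 1) : ℕ) : ℝ)) ^ 2 = 6 * (m + 1) := by
    rw [Real.sq_sqrt (by positivity)]; push_cast; ring
  have q3 : ((3 : ℝ) / 2) ^ m = (3 / 2) ^ (m + 1) * (2 / 3) := by
    rw [pow_succ]; ring
  rw [q3]
  set q := √(2 * ((m + 1 : ℕ) : ℝ))
  set q' := √(2 * ((3 * (m + 1) : ℕ) : ℝ)) with hq'
  have hq0 : q' ≠ 0 := by rw [hq']; positivity
  have hE : Real.exp 1 ≠ 0 := by positivity
  set E := Real.exp 1
  have key : ((3 / 2 : ℝ) ^ (m + 1)) ^ 4 * ((((m + 1 : ℕ) : ℝ) / E) ^ (m + 1)) ^ 4 =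
      ((E / (12 * (m + 1))) ^ (m + 1)) ^ 2 *
        ((((3 * (m + 1) : ℕ) : ℝ) / E) ^ (3 * (m + 1))) ^ 2 := by
    have e : ∀ (x : ℝ) (i : ℕ), (x ^ (m + 1)) ^ i = (x ^ i) ^ (m + 1) := fun x i => by
      rw [← pow_mul, ← pow_mul, mul_comm]
    rw [pow_mul _ 3 (m + 1), e, e, e, e, ← mul_pow _ _ (m + 1), ← mul_pow _ _ (m + 1)]
    congr 1
    push_cast
    field_simp
    norm_num
  set u := (3 / 2 : ℝ) ^ (m + 1)
  set v := (((m + 1 : ℕ) : ℝ) / E) ^ (m + 1)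
  set z := (E / (12 * (m + 1))) ^ (m + 1)
  set w := (((3 * (m + 1) : ℕ) : ℝ) / E) ^ (3 * (m + 1)) with hw
  have hw0 : w ≠ 0 := by rw [hw]; positivity
  have key' : u ^ 4 * v ^ 4 / w ^ 2 = z ^ 2 := by rw [key]; field_simp
  calc _ = ar m ^ 4 * nr (3 * m + 1) * S ^ 4 / S3 ^ 2 * (q ^ 4 / q' ^ 2) * (u ^ 4 * v ^ 4 / w ^ 2)
        * (16 / 9 * (3 * m + 2) ^ 3 / (m + 1) ^ 2) := by
        field_simp
        ring
    _ = _ := by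
        rw [q1, q2, key']
        have h3 : (3 : ℝ) - 1 / (m + 1) = (3 * m + 2) / (m + 1) := by field_simp; ring
        rw [h3]
        field_simp
        ring

/-- The part of the asymptotics depending on the excess only. -/
noncomputable def cr (m : ℕ) : ℝ := a (m + 1) * nu (3 * m + 1) /
  ((Real.exp 1 / (12 * ((m : ℝ) + 1))) ^ (((m : ℝ) + 1) / 2) * (3 / √π) *
    ((m : ℝ) + 1) ^ ((1 : ℝ) / 2))

theorem cr_pow_four (m : ℕ) : cr m ^ 4 =
    ar m ^ 4 * nr (3 * m + 1) * Stirling.stirlingSeq (m + 1) ^ 4 /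
      Stirling.stirlingSeq (3 * (m + 1)) ^ 2 * (32 / 2187 * π ^ 2)
      * (3 - 1 / ((m : ℝ) + 1)) ^ 3 := by
  have hb : (0 : ℝ) < Real.exp 1 / (12 * ((m : ℝ) + 1)) := by positivity
  have hm : (0 : ℝ) < (m : ℝ) + 1 := by positivity
  have e1 : ((Real.exp 1 / (12 * ((m : ℝ) + 1))) ^ (((m : ℝ) + 1) / 2)) ^ 4 =
      ((Real.exp 1 / (12 * (m + 1))) ^ (m + 1)) ^ 2 := by
    rw [← Real.rpow_natCast _ 4, ← Real.rpow_mul hb.le, ← pow_mul, ← Real.rpow_natCast _ (_ * _)]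
    congr 1
    push_cast
    ring
  have e2 : (((m : ℝ) + 1) ^ ((1 : ℝ) / 2)) ^ 4 = ((m : ℝ) + 1) ^ 2 := by
    rw [← Real.sqrt_eq_rpow, show 4 = 2 * 2 from rfl, pow_mul, Real.sq_sqrt hm.le]
  have e3 : √π ^ 4 = π ^ 2 := by
    rw [show 4 = 2 * 2 from rfl, pow_mul, Real.sq_sqrt Real.pi_pos.le]
  rw [cr, div_pow, four_pow_eq, mul_pow _ _ 4, mul_pow _ _ 4, e1, e2, div_pow 3, e3]
  rw [div_eq_iff (by positivity)]
  ring

theorem cr_tendsto : Tendsto cr atTop (nhds 1) := by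
  have t1 : Tendsto (fun m : ℕ => m + 1) atTop atTop := tendsto_add_atTop_nat 1
  have t3 : Tendsto (fun m : ℕ => 3 * (m + 1)) atTop atTop :=
    tendsto_atTop_mono (fun m => by omega) t1
  have t4 : Tendsto (fun m : ℕ => 3 * m + 1) atTop atTop :=
    tendsto_atTop_mono (fun m => by omega) t1
  have hS := Stirling.tendsto_stirlingSeq_sqrt_pi
  have h := (((((ar_tendsto.pow 4).mul (nr_tendsto.comp t4)).mul ((hS.comp t1).pow 4)).div
    ((hS.comp t3).pow 2) (by positivity)).mul_const (32 / 2187 * π ^ 2)).mul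
    (((tendsto_one_div_add_atTop_nhds_zero_nat (𝕜 := ℝ)).const_sub 3).pow 3)
  have e : (3 / (2 * π)) ^ 4 * (π / 2) * √π ^ 4 / √π ^ 2 * (32 / 2187 * π ^ 2) *
      (3 - 0 : ℝ) ^ 3 = 1 := by
    rw [show √π ^ 4 = √π ^ 2 * √π ^ 2 by ring, Real.sq_sqrt Real.pi_pos.le]
    field_simp
    norm_num
  rw [e] at h
  have h4 : Tendsto (fun m => cr m ^ 4) atTop (nhds 1) :=
    h.congr fun m => by rw [cr_pow_four]; rfl
  have h5 := (h4.sqrt).sqrt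
  rw [Real.sqrt_one, Real.sqrt_one] at h5
  refine h5.congr fun m => ?_
  have hp : 0 ≤ cr m := by
    have := a_pos m
    have := nu_pos (3 * m + 1)
    rw [cr]
    positivity
  rw [show cr m ^ 4 = (cr m ^ 2) ^ 2 by ring, Real.sqrt_sq (by positivity), Real.sqrt_sq hp]

/-! ### Comparison with the number of connected graphs -/

theorem coeff_th_W (n k : ℕ) : PowerSeries.coeff n (th (W k)) =
    connGraphCount n k * (n / n.factorial) := by
  rw [coeff_th, W, PowerSeries.coeff_mk, show connCard (Fin n) (n + k - 1) = connGraphCount n k from rfl]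
  ring

theorem coeff_P_pow_eq {n : ℕ} (hn : 0 < n) (l : ℕ) : PowerSeries.coeff n (P ^ (l + 1)) =
    rho n l * ((n : ℝ) ^ n * √n ^ l * nu l) / n.factorial := by
  have hr : 0 < √(n : ℝ) := Real.sqrt_pos.2 (by exact_mod_cast hn)
  have := nu_pos l
  rw [rho]
  field_simp

/-- The leading term of the number of connected graphs on `n` vertices of excess `m + 1`. -/
noncomputable def lead (n m : ℕ) : ℝ :=
  a (m + 1) * ((n : ℝ) ^ n * √n ^ (3 * m + 1) * nu (3 * m + 1)) / n

theorem lead_pos {n : ℕ} (hn : 0 < n) (m : ℕ) : 0 < lead n m := by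
  have hr : 0 < √(n : ℝ) := Real.sqrt_pos.2 (by exact_mod_cast hn)
  have := nu_pos (3 * m + 1)
  have := a_pos m
  rw [lead]
  positivity

theorem count_le {n : ℕ} (hn : 0 < n) (m : ℕ) :
    connGraphCount n (m + 1) / lead n m ≤ rho n (3 * m + 1) := by
  have h := (upper m).1 n
  have h0 : 0 ≤ PowerSeries.coeff n (PowerSeries.C (a (m + 1)) * P ^ (3 * m + 1)) :=
    ((Pos.C (a_pos m).le).mul (posP.pow _)) n
  rw [mul_sub, map_sub, map_sub, coeff_th_W, PowerSeries.coeff_C_mul, coeff_P_pow_eq hn] at h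
  rw [div_le_iff₀ (lead_pos hn m), lead]
  have hc : 0 < (n : ℝ) / n.factorial := by positivity
  refine le_of_mul_le_mul_right ?_ hc
  have e : rho n (3 * m + 1) * (a (m + 1) * ((n : ℝ) ^ n * √n ^ (3 * m + 1) * nu (3 * m + 1)) / n) *
      (n / n.factorial) = a (m + 1) * (rho n (3 * m + 1) *
        ((n : ℝ) ^ n * √n ^ (3 * m + 1) * nu (3 * m + 1)) / n.factorial) := by
    field_simp
  rw [e]
  linarith

theorem le_count {D : ℝ} (hD0 : 0 ≤ D) (hD : ∀ m : ℕ, a (m + 2) ≤ D * (m + 2) * a (m + 1))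
    {n : ℕ} (hn : 0 < n) (m : ℕ) :
    rho n (3 * m + 1) - (3 + D) * ((m + 1) * nu (3 * m) / (√n * nu (3 * m + 1))) * rho n (3 * m)
      ≤ connGraphCount n (m + 1) / lead n m := by
  have hr : 0 < √(n : ℝ) := Real.sqrt_pos.2 (by exact_mod_cast hn)
  have hnu := nu_pos (3 * m + 1)
  have h := lower hD0 hD m n
  rw [map_add, map_sub, coeff_th_W, PowerSeries.coeff_C_mul, PowerSeries.coeff_C_mul,
    coeff_P_pow_eq hn, coeff_P_pow_eq hn] at h
  rw [le_div_iff₀ (lead_pos hn m), lead]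
  have hc : 0 < (n : ℝ) / n.factorial := by positivity
  refine le_of_mul_le_mul_right ?_ hc
  have e : (rho n (3 * m + 1) - (3 + D) * ((m + 1) * nu (3 * m) / (√n * nu (3 * m + 1))) *
      rho n (3 * m)) * (a (m + 1) * ((n : ℝ) ^ n * √n ^ (3 * m + 1) * nu (3 * m + 1)) / n) *
      (n / n.factorial) = a (m + 1) * (rho n (3 * m + 1) *
        ((n : ℝ) ^ n * √n ^ (3 * m + 1) * nu (3 * m + 1)) / n.factorial) -
      (3 + D) * (m + 1) * a (m + 1) * (rho n (3 * m) *
        ((n : ℝ) ^ n * √n ^ (3 * m) * nu (3 * m)) / n.factorial) := by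
    field_simp
    ring
  rw [e]
  linarith

theorem correction_le {n : ℕ} (hn : 0 < n) (m : ℕ) :
    (m + 1) * nu (3 * m) / (√n * nu (3 * m + 1)) ≤ √(6 * (((m : ℝ) + 1) ^ 3 / n)) := by
  have hs : √(n : ℝ) ^ 2 = n := Real.sq_sqrt n.cast_nonneg
  have hnu := nu_pos (3 * m + 1)
  apply Real.le_sqrt_of_sq_le
  rw [div_pow, mul_pow, mul_pow, hs, div_le_iff₀ (by positivity)]
  have h := nu_le_nu_succ (3 * m)
  push_cast at h
  calc ((m : ℝ) + 1) ^ 2 * nu (3 * m) ^ 2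
      ≤ ((m : ℝ) + 1) ^ 2 * (2 * (3 * m + 1) * nu (3 * m + 1) ^ 2) := by gcongr
    _ ≤ ((m : ℝ) + 1) ^ 2 * (2 * (3 * m + 3) * nu (3 * m + 1) ^ 2) := by gcongr; norm_num
    _ = _ := by field_simp; ring

/-- The number of connected graphs is asymptotic to its leading term if the cube of the excess
is negligible against the number of vertices. -/
theorem count_div_lead_tendsto {m : ℕ → ℕ}
    (hm : Tendsto (fun n : ℕ => ((m n : ℝ) + 1) ^ 3 / n) atTop (nhds 0)) :
    Tendsto (fun n => connGraphCount n (m n + 1) / lead n (m n)) atTop (nhds 1) := by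
  obtain ⟨D, hD0, hD⟩ := exists_a_step
  have hl : ∀ c : ℕ, c ≤ 3 → Tendsto (fun n : ℕ => ((3 * m n + c : ℕ) : ℝ) ^ 3 / n) atTop
      (nhds 0) := fun c hc => by
    have h := hm.const_mul 27
    rw [mul_zero] at h
    refine squeeze_zero (fun n => by positivity) (fun n => ?_) h
    have : ((3 * m n + c : ℕ) : ℝ) ≤ 3 * ((m n : ℝ) + 1) := by
      have : 3 * m n + c ≤ 3 * (m n + 1) := by omega
      exact_mod_cast this
    calc ((3 * m n + c : ℕ) : ℝ) ^ 3 / n ≤ (3 * ((m n : ℝ) + 1)) ^ 3 / n := by gcongr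
      _ = _ := by ring
  have r0 := rho_tendsto (hl 0 (by norm_num))
  have r1 := rho_tendsto (hl 1 (by norm_num))
  have hc : Tendsto (fun n : ℕ => ((m n : ℝ) + 1) * nu (3 * m n) / (√n * nu (3 * m n + 1))) atTop
      (nhds 0) := by
    have h := (hm.const_mul 6).sqrt
    rw [mul_zero, Real.sqrt_zero] at h
    refine squeeze_zero' (Eventually.of_forall fun n => ?_) ?_ h
    · have := nu_pos (3 * m n)
      have := nu_pos (3 * m n + 1)
      positivity
    · filter_upwards [eventually_gt_atTop 0] with n hn using correction_le hn _
  refine tendsto_of_tendsto_of_tendsto_of_le_of_le' ?_ r1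
    (by filter_upwards [eventually_gt_atTop 0] with n hn using le_count hD0 hD hn _)
    (by filter_upwards [eventually_gt_atTop 0] with n hn using count_le hn _)
  simpa using r1.sub ((hc.const_mul (3 + D)).mul r0)

theorem lead_eq {n : ℕ} (hn : 0 < n) (m : ℕ) : lead n m =
    (n : ℝ) ^ ((n : ℝ) - 2) * (n : ℝ) ^ (3 * ((m : ℝ) + 1) / 2) *
      (a (m + 1) * nu (3 * m + 1)) := by
  have hn' : (0 : ℝ) < n := by exact_mod_cast hn
  have e : (n : ℝ) ^ n * √n ^ (3 * m + 1) / n =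
      (n : ℝ) ^ ((n : ℝ) - 2) * (n : ℝ) ^ (3 * ((m : ℝ) + 1) / 2) := by
    rw [Real.sqrt_eq_rpow, ← Real.rpow_natCast _ (3 * m + 1), ← Real.rpow_mul hn'.le,
      ← Real.rpow_natCast (n : ℝ) n, ← Real.rpow_add hn', ← Real.rpow_add hn',
      ← Real.rpow_sub_one hn'.ne']
    congr 1
    push_cast
    ring
  rw [← e, lead]
  ring

/-- **Asymptotics of `C(n, kₙ)` for `kₙ → ∞`, `kₙ = o(n^{1/3})`.**  For any sequence of
positive integers `kₙ → ∞` with `kₙ = o(n^{1/3})`,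
`C(n,kₙ) ~ n^{n-2} n^{3kₙ/2} (e/(12 kₙ))^{kₙ/2} (3/√π) kₙ^{1/2}`, i.e. the ratio of the
two sides tends to `1`. -/
theorem stmt7 (k : ℕ → ℕ) (hpos : ∀ n, 0 < k n)
    (hinf : Tendsto k atTop atTop)
    (ho : Tendsto (fun n : ℕ => (k n : ℝ) / (n : ℝ) ^ ((1 : ℝ) / 3)) atTop (nhds 0)) :
    Tendsto (fun n : ℕ =>
        (connGraphCount n (k n) : ℝ) /
          ((n : ℝ) ^ ((n : ℝ) - 2) * (n : ℝ) ^ (3 * (k n : ℝ) / 2) *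
            (Real.exp 1 / (12 * (k n : ℝ))) ^ ((k n : ℝ) / 2) *
            (3 / Real.sqrt π) * (k n : ℝ) ^ ((1 : ℝ) / 2)))
      atTop (nhds 1) := by
  -- Positivity of the excess allows writing it as `m n + 1`.
  obtain ⟨m, rfl⟩ : ∃ m : ℕ → ℕ, k = fun n => m n + 1 :=
    ⟨fun n => k n - 1, funext fun n => (Nat.sub_add_cancel (hpos n)).symm⟩
  have hm : Tendsto (fun n : ℕ => ((m n : ℝ) + 1) ^ 3 / n) atTop (nhds 0) := by
    have h := ho.pow 3
    rw [zero_pow (by norm_num)] at h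
    refine h.congr fun n => ?_
    rw [div_pow, ← Real.rpow_natCast _ 3, ← Real.rpow_natCast (_ ^ _) 3,
      ← Real.rpow_mul n.cast_nonneg]
    norm_num
  have hmt : Tendsto m atTop atTop := by
    refine tendsto_atTop.2 fun b => ?_
    filter_upwards [tendsto_atTop.1 hinf (b + 1)] with n hn
    exact Nat.le_of_succ_le_succ hn
  have h := (count_div_lead_tendsto hm).mul (cr_tendsto.comp hmt)
  rw [mul_one] at h
  refine h.congr' ?_
  filter_upwards [eventually_gt_atTop 0] with n hn
  have h1 := a_pos (m n)
  have h2 := nu_pos (3 * m n + 1)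
  simp only [Function.comp_apply]
  rw [lead_eq hn, cr]
  push_cast
  field_simp
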